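/- arXiv:2006.09629 — 8 statements merged into one kernel-verified Lean document; each statement's English description precedes it below -/
import Mathlib

section
/- Let S and T be types, m and N positive integers, and suppose given for every σ ∈ T a finite subset F(σ) ⊆ S with card F(σ) ≤ m together with coefficients ε(σ,τ) ∈ ℝ with |ε(σ,τ)| ≤ 1, such that every τ ∈ S satisfies τ ∈ F(σ) for at most N elements σ ∈ T. For θ : S → ℝ define δθ : T → ℝ by δθ(σ) = Σ_{τ ∈ F(σ)} ε(σ,τ)·θ(τ). Then for every Young function φ and every θ : S → ℝ, the Luxembourg norms with respect to counting measure satisfy ‖δθ‖_{ℓ^φ(T)} ≤ max(m, N)·‖θ‖_{ℓ^φ(S)}; in particular δ : ℓ^φ(S) → ℓ^φ(T) is a bounded linear operator. -/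
open MeasureTheory
open scoped ENNReal

/-- A Young function: even, convex, nonnegative, and vanishing exactly at `0`. -/
def IsYoung (φ : ℝ → ℝ) : Prop :=
  (∀ t, φ (-t) = φ t) ∧ ConvexOn ℝ Set.univ φ ∧ (∀ t, 0 ≤ φ t) ∧ (∀ t, φ t = 0 ↔ t = 0)

/-- The Luxembourg norm `‖f‖_{L^φ} = inf {γ > 0 : ∫ φ(f/γ) dμ ≤ 1}` (with `inf ∅ = ∞`). -/
noncomputable def luxNorm {Z : Type*} [MeasurableSpace Z] (μ : Measure Z) (φ : ℝ → ℝ)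
    (f : Z → ℝ) : ℝ≥0∞ :=
  sInf (ENNReal.ofReal ''
    {γ : ℝ | 0 < γ ∧ ∫⁻ z, ENNReal.ofReal (φ (f z / γ)) ∂μ ≤ 1})

lemma IsYoung.map_mul_le {φ : ℝ → ℝ} (hφ : IsYoung φ) (e x : ℝ) (he : |e| ≤ 1) :
    φ (e * x) ≤ φ x := by
  obtain ⟨hev, hc, hn, hz⟩ := hφ
  have key : ∀ e : ℝ, 0 ≤ e → e ≤ 1 → φ (e * x) ≤ φ x := by
    intro e h0 h1
    have h := hc.2 (Set.mem_univ x) (Set.mem_univ 0) h0 (sub_nonneg.2 h1) (by ring)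
    have z : φ 0 = 0 := (hz 0).2 rfl
    simp only [smul_eq_mul, mul_zero, add_zero, z] at h
    nlinarith [hn x]
  rcases abs_le.1 he with ⟨h1, h2⟩
  rcases le_total 0 e with h | h
  · exact key e h h2
  · rw [← hev, ← neg_mul]
    exact key (-e) (by linarith) (by linarith)

lemma IsYoung.map_sum_le' {φ : ℝ → ℝ} (hφ : IsYoung φ) {S : Type*} (s : Finset S) (c : ℝ)
    (hc0 : 0 < c) (hc : (s.card : ℝ) ≤ c) (a x : S → ℝ) (ha : ∀ i, |a i| ≤ 1) :
    φ (∑ i ∈ s, c⁻¹ * (a i * x i)) ≤ ∑ i ∈ s, c⁻¹ * φ (x i) := by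
  have z : φ 0 = 0 := (hφ.2.2.2 0).2 rfl
  have h1 : (s.card : ℝ) * c⁻¹ ≤ 1 := by
    rw [← div_eq_mul_inv]; exact (div_le_one hc0).2 hc
  have h := hφ.2.1.map_add_sum_le (t := s) (w := fun _ => c⁻¹) (p := fun i => a i * x i)
    (v := 1 - s.card * c⁻¹) (q := 0) (fun _ _ => by positivity)
    (by simp) (fun _ _ => Set.mem_univ _) (by linarith) (Set.mem_univ _)
  simp only [smul_eq_mul, mul_zero, zero_add, z] at h
  refine h.trans (Finset.sum_le_sum fun i _ => ?_)
  exact mul_le_mul_of_nonneg_left (hφ.map_mul_le _ _ (ha i)) (by positivity)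

lemma tsum_sum_le_aux {S T : Type*} (N : ℕ) (F : T → Finset S)
    (hmult : ∀ τ : S, {σ : T | τ ∈ F σ}.Finite ∧ {σ : T | τ ∈ F σ}.ncard ≤ N)
    (g : S → ℝ≥0∞) : ∑' σ, ∑ τ ∈ F σ, g τ ≤ N * ∑' τ, g τ := by
  classical
  have h1 : ∀ σ, ∑ τ ∈ F σ, g τ = ∑' τ, if τ ∈ F σ then g τ else 0 := by
    intro σ
    rw [tsum_eq_sum (s := F σ) (fun b hb => by simp [hb])]
    exact Finset.sum_congr rfl fun i hi => by simp [hi]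
  simp_rw [h1]
  rw [ENNReal.tsum_comm, ← ENNReal.tsum_mul_left]
  refine ENNReal.tsum_le_tsum fun τ => ?_
  obtain ⟨hf, hn⟩ := hmult τ
  rw [tsum_eq_sum (s := hf.toFinset) (fun b hb => by
    have : τ ∉ F b := by simpa using hb
    simp [this])]
  calc _ ≤ ∑ σ ∈ hf.toFinset, g τ := Finset.sum_le_sum fun i _ => by split_ifs <;> simp
    _ = (hf.toFinset.card : ℝ≥0∞) * g τ := by simp
    _ ≤ _ := by
      rw [← Set.ncard_eq_toFinset_card _ hf]
      gcongr

/-- the abstract coboundary operator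
`δθ(σ) = Σ_{τ ∈ F(σ)} ε(σ,τ)·θ(τ)`, where `F(σ)` has at most `m` elements, the
coefficients `ε` are bounded by `1`, and every `τ` lies in `F(σ)` for at most `N`
elements `σ`, is bounded from `ℓ^φ(S)` to `ℓ^φ(T)` with norm at most `max m N`. -/
theorem coboundary_luxNorm_le {S T : Type*}
    [MeasurableSpace S] [MeasurableSingletonClass S]
    [MeasurableSpace T] [MeasurableSingletonClass T]
    (m N : ℕ) (hm : 0 < m) (hN : 0 < N)
    (F : T → Finset S) (hFcard : ∀ σ : T, (F σ).card ≤ m)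
    (ε : T → S → ℝ) (hε : ∀ (σ : T) (τ : S), |ε σ τ| ≤ 1)
    (hmult : ∀ τ : S, {σ : T | τ ∈ F σ}.Finite ∧ {σ : T | τ ∈ F σ}.ncard ≤ N)
    (φ : ℝ → ℝ) (hφ : IsYoung φ) (θ : S → ℝ) :
    luxNorm (Measure.count : Measure T) φ (fun σ => ∑ τ ∈ F σ, ε σ τ * θ τ) ≤
      (max m N : ℕ) * luxNorm (Measure.count : Measure S) φ θ := by
  classical
  set c : ℕ := max m N with hcdef
  have hc : 0 < c := lt_of_lt_of_le hm (le_max_left _ _)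
  have hcR : (0 : ℝ) < c := by exact_mod_cast hc
  have hc0 : (c : ℝ≥0∞) ≠ 0 := by exact_mod_cast hc.ne'
  rw [mul_comm, ← ENNReal.div_le_iff hc0 (ENNReal.natCast_ne_top c)]
  refine le_sInf ?_
  rintro _ ⟨γ, ⟨hγ, hint⟩, rfl⟩
  rw [ENNReal.div_le_iff hc0 (ENNReal.natCast_ne_top c)]
  refine sInf_le ⟨γ * c, ⟨by positivity, ?_⟩, ?_⟩
  · rw [lintegral_count] at hint ⊢
    have key : ∀ σ, ENNReal.ofReal (φ ((∑ τ ∈ F σ, ε σ τ * θ τ) / (γ * c))) ≤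
        (c : ℝ≥0∞)⁻¹ * ∑ τ ∈ F σ, ENNReal.ofReal (φ (θ τ / γ)) := by
      intro σ
      have h := hφ.map_sum_le' (F σ) c hcR
        (by exact_mod_cast (hFcard σ).trans (le_max_left _ _)) (ε σ) (fun τ => θ τ / γ) (hε σ)
      have e : (∑ τ ∈ F σ, ε σ τ * θ τ) / (γ * c) =
          ∑ τ ∈ F σ, (c : ℝ)⁻¹ * (ε σ τ * (θ τ / γ)) := by
        rw [Finset.sum_div]
        exact Finset.sum_congr rfl fun i _ => by field_simp
      rw [e]
      refine (ENNReal.ofReal_le_ofReal h).trans (le_of_eq ?_)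
      rw [← Finset.mul_sum, ENNReal.ofReal_mul (by positivity), ENNReal.ofReal_inv_of_pos hcR,
        ENNReal.ofReal_natCast, ENNReal.ofReal_sum_of_nonneg fun i _ => hφ.2.2.1 _]
    refine (ENNReal.tsum_le_tsum key).trans ?_
    rw [ENNReal.tsum_mul_left]
    calc _ ≤ (c : ℝ≥0∞)⁻¹ * (N * 1) := by
          gcongr
          refine (tsum_sum_le_aux N F hmult _).trans ?_
          gcongr
      _ ≤ (c : ℝ≥0∞)⁻¹ * c := by
          rw [mul_one]
          gcongr
          exact le_max_right _ _
      _ = 1 := ENNReal.inv_mul_cancel hc0 (ENNReal.natCast_ne_top c)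
  · rw [ENNReal.ofReal_mul hγ.le, ENNReal.ofReal_natCast]
end

section
/- Let S and T be types, L and D positive integers, A > 0 a real number, and c : T × S → ℝ a function such that for every σ ∈ T the set {τ ∈ S : c(σ,τ) ≠ 0} has at most L elements and |c(σ,τ)| ≤ A for all τ, and such that for every τ ∈ S the set {σ ∈ T : c(σ,τ) ≠ 0} has at most D elements. For θ : S → ℝ define c·θ : T → ℝ by (c·θ)(σ) = Σ_{τ : c(σ,τ)≠0} c(σ,τ)·θ(τ). Then for every Young function φ, the Luxembourg norms with respect to counting measure satisfy ‖c·θ‖_{ℓ^φ(T)} ≤ A·max(L, D)·‖θ‖_{ℓ^φ(S)}. -/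
open MeasureTheory
open scoped ENNReal

theorem young_contr {φ : ℝ → ℝ} (hφ : IsYoung φ) (a x : ℝ) (ha : |a| ≤ 1) :
    φ (a * x) ≤ φ x := by
  obtain ⟨he, hc, -, -⟩ := hφ
  have h1 := abs_le.1 ha
  have p1 : 0 ≤ (1 + a) / 2 := by linarith
  have p2 : 0 ≤ (1 - a) / 2 := by linarith
  have := hc.2 (Set.mem_univ x) (Set.mem_univ (-x)) p1 p2 (by ring)
  simp only [smul_eq_mul, he] at this
  have e : (1 + a) / 2 * x + (1 - a) / 2 * -x = a * x := by ring
  rw [e] at this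
  linarith

theorem young_sum {S : Type*} {φ : ℝ → ℝ} (hφ : IsYoung φ) (F : Finset S) (M : ℕ) (hM : 0 < M)
    (hF : F.card ≤ M) (x : S → ℝ) :
    φ (∑ τ ∈ F, (M : ℝ)⁻¹ * x τ) ≤ ∑ τ ∈ F, (M : ℝ)⁻¹ * φ (x τ) := by
  obtain ⟨he, hc, hn, h0⟩ := hφ
  have hM' : (0 : ℝ) < M := by exact_mod_cast hM
  have hF' : (F.card : ℝ) ≤ M := by exact_mod_cast hF
  have := hc.map_add_sum_le (t := F) (w := fun _ => (M : ℝ)⁻¹) (p := x)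
    (v := 1 - F.card * (M : ℝ)⁻¹) (q := 0) (fun _ _ => by positivity) (by simp)
    (fun _ _ => Set.mem_univ _)
    (by
      rw [← div_eq_mul_inv, sub_nonneg, div_le_one hM']; exact hF') (Set.mem_univ _)
  simpa [(h0 0).2 rfl] using this

/-- if `c : T × S → ℝ` has rows of support-size at most `L` with entries
bounded by `A`, and columns of support-size at most `D`, then
`(c·θ)(σ) = Σ_{τ : c(σ,τ) ≠ 0} c(σ,τ)·θ(τ)` defines an operator which is bounded from
`ℓ^φ(S)` to `ℓ^φ(T)` with norm at most `A·max(L,D)`. -/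
theorem pullback_luxNorm_le {S T : Type*}
    [MeasurableSpace S] [MeasurableSingletonClass S]
    [MeasurableSpace T] [MeasurableSingletonClass T]
    (L D : ℕ) (hL : 0 < L) (hD : 0 < D) (A : ℝ) (hA : 0 < A)
    (c : T → S → ℝ)
    (hrow : ∀ σ : T, {τ : S | c σ τ ≠ 0}.Finite ∧ {τ : S | c σ τ ≠ 0}.ncard ≤ L)
    (hbound : ∀ (σ : T) (τ : S), |c σ τ| ≤ A)
    (hcol : ∀ τ : S, {σ : T | c σ τ ≠ 0}.Finite ∧ {σ : T | c σ τ ≠ 0}.ncard ≤ D)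
    (φ : ℝ → ℝ) (hφ : IsYoung φ) (θ : S → ℝ) :
    luxNorm (Measure.count : Measure T) φ (fun σ => ∑ᶠ τ : S, c σ τ * θ τ) ≤
      ENNReal.ofReal A * (max L D : ℕ) * luxNorm (Measure.count : Measure S) φ θ := by
  classical
  set M := max L D with hMdef
  have hM : 0 < M := lt_max_of_lt_left hL
  have hM' : (0 : ℝ) < M := by exact_mod_cast hM
  have key : ∀ γ : ℝ, 0 < γ → ∫⁻ z, ENNReal.ofReal (φ (θ z / γ)) ∂(Measure.count : Measure S) ≤ 1 →
      ∫⁻ z, ENNReal.ofReal (φ ((∑ᶠ τ : S, c z τ * θ τ) / (A * M * γ)))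
        ∂(Measure.count : Measure T) ≤ 1 := by
    intro γ hγ h
    rw [lintegral_count] at h ⊢
    refine le_trans ?_ h
    have step : ∀ σ : T, ENNReal.ofReal (φ ((∑ᶠ τ : S, c σ τ * θ τ) / (A * M * γ))) ≤
        ∑' τ : S, if c σ τ ≠ 0 then (M : ℝ≥0∞)⁻¹ * ENNReal.ofReal (φ (θ τ / γ)) else 0 := by
      intro σ
      obtain ⟨hfin, hcard⟩ := hrow σ
      rw [Set.ncard_eq_toFinset_card _ hfin] at hcard
      have e1 : (∑ᶠ τ : S, c σ τ * θ τ) = ∑ τ ∈ hfin.toFinset, c σ τ * θ τ := by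
        apply finsum_eq_sum_of_support_subset
        intro τ hτ
        simp only [Function.mem_support] at hτ
        simpa using left_ne_zero_of_mul hτ
      have e2 : (∑ τ ∈ hfin.toFinset, c σ τ * θ τ) / (A * M * γ) =
          ∑ τ ∈ hfin.toFinset, (M : ℝ)⁻¹ * ((c σ τ / A) * (θ τ / γ)) := by
        rw [Finset.sum_div]
        refine Finset.sum_congr rfl fun τ _ => ?_
        field_simp
      rw [e1, e2]
      have h3 : φ (∑ τ ∈ hfin.toFinset, (M : ℝ)⁻¹ * ((c σ τ / A) * (θ τ / γ))) ≤
          ∑ τ ∈ hfin.toFinset, (M : ℝ)⁻¹ * φ (θ τ / γ) := by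
        refine (young_sum hφ _ M hM (hcard.trans (le_max_left _ _)) _).trans ?_
        refine Finset.sum_le_sum fun τ _ => ?_
        refine mul_le_mul_of_nonneg_left (young_contr hφ _ _ ?_) (by positivity)
        rw [abs_div, abs_of_pos hA, div_le_one hA]
        exact hbound σ τ
      refine (ENNReal.ofReal_le_ofReal h3).trans ?_
      rw [ENNReal.ofReal_sum_of_nonneg
        (fun τ _ => mul_nonneg (by positivity) (hφ.2.2.1 _))]
      rw [tsum_eq_sum (s := hfin.toFinset)]
      · refine Finset.sum_le_sum fun τ hτ => ?_
        have : c σ τ ≠ 0 := by simpa using hτ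
        rw [if_pos this, ENNReal.ofReal_mul (by positivity), ENNReal.ofReal_inv_of_pos hM',
          ENNReal.ofReal_natCast]
      · intro τ hτ
        have : c σ τ = 0 := by simpa using hτ
        simp [this]
    refine (ENNReal.tsum_le_tsum step).trans ?_
    rw [ENNReal.tsum_comm]
    refine ENNReal.tsum_le_tsum fun τ => ?_
    obtain ⟨hfin, hcard⟩ := hcol τ
    rw [Set.ncard_eq_toFinset_card _ hfin] at hcard
    rw [tsum_eq_sum (s := hfin.toFinset)]
    · calc _ ≤ ∑ σ ∈ hfin.toFinset, (M : ℝ≥0∞)⁻¹ * ENNReal.ofReal (φ (θ τ / γ)) := by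
            refine Finset.sum_le_sum fun σ _ => ?_
            split_ifs <;> simp
        _ = (hfin.toFinset.card : ℝ≥0∞) * (M : ℝ≥0∞)⁻¹ * ENNReal.ofReal (φ (θ τ / γ)) := by
            rw [Finset.sum_const, nsmul_eq_mul, mul_assoc]
        _ ≤ 1 * ENNReal.ofReal (φ (θ τ / γ)) := by
            gcongr
            rw [← div_eq_mul_inv]
            refine ENNReal.div_le_of_le_mul ?_
            rw [one_mul]
            exact_mod_cast hcard.trans (le_max_right _ _)
        _ = _ := one_mul _
    · intro σ hσ
      have : c σ τ = 0 := by simpa using hσ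
      simp [this]
  have hK0 : ENNReal.ofReal A * (M : ℝ≥0∞) ≠ 0 := by
    simp [hA, hM.ne']
  have hKt : ENNReal.ofReal A * (M : ℝ≥0∞) ≠ ⊤ :=
    ENNReal.mul_ne_top ENNReal.ofReal_ne_top (ENNReal.natCast_ne_top M)
  rw [mul_comm, ← ENNReal.div_le_iff_le_mul (Or.inl hK0) (Or.inl hKt)]
  unfold luxNorm
  refine le_sInf ?_
  rintro _ ⟨γ, ⟨hγ, h⟩, rfl⟩
  rw [ENNReal.div_le_iff_le_mul (Or.inl hK0) (Or.inl hKt), mul_comm]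
  refine sInf_le ⟨A * M * γ, ⟨by positivity, key γ hγ h⟩, ?_⟩
  rw [ENNReal.ofReal_mul (by positivity), ENNReal.ofReal_mul hA.le, ENNReal.ofReal_natCast]
end

section
/- Let n ≥ 1 be an integer, let y ∈ ℝⁿ with ‖y‖ < 1, and let z ∈ ℝⁿ with z ≠ y. Then ∫₀¹ 𝟙{‖z − t·y‖ < (1−t)/2} · (1−t)^{−n−1} dt ≤ 2ⁿ / (n·‖z − y‖ⁿ), where 𝟙 denotes the indicator of the stated condition on t. -/
open MeasureTheory
open scoped ENNReal

/-- the kernel estimate in the proof of the `L^φ` Poincaré lemma on the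
Euclidean unit ball: for `y` in the unit ball of `ℝⁿ` and `z ≠ y`,
`∫₀¹ 𝟙{‖z − t·y‖ < (1−t)/2} (1−t)^{−n−1} dt ≤ 2ⁿ/(n‖z−y‖ⁿ)`. -/
theorem cone_kernel_estimate (n : ℕ) (hn : 1 ≤ n)
    (y z : EuclideanSpace ℝ (Fin n)) (hy : ‖y‖ < 1) (hz : z ≠ y) :
    (∫⁻ t in Set.Ioo (0 : ℝ) 1,
        if ‖z - t • y‖ < (1 - t) / 2 then ENNReal.ofReal ((1 - t) ^ (-(n : ℝ) - 1))
        else 0) ≤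
      ENNReal.ofReal (2 ^ n / (n * ‖z - y‖ ^ n)) := by
  have hd : 0 < ‖z - y‖ := norm_pos_iff.mpr (sub_ne_zero.mpr hz)
  have hn0 : (0 : ℝ) < n := by exact_mod_cast hn
  set d : ℝ := ‖z - y‖ / 2 with hdd
  have hd0 : 0 < d := by positivity
  have hexp : -(n : ℝ) - 1 < -1 := by linarith
  let F : ℝ → ℝ≥0∞ := (Set.Ioi d).indicator (fun r => ENNReal.ofReal (r ^ (-(n : ℝ) - 1)))
  calc _ ≤ ∫⁻ t in Set.Ioo (0 : ℝ) 1, F (1 - t) := by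
        refine setLIntegral_mono' measurableSet_Ioo ?_
        intro t ht
        split_ifs with h
        · have h1 : z - y = (z - t • y) - (1 - t) • y := by
            rw [sub_smul, one_smul]; abel
          have h2 : ‖z - y‖ ≤ ‖z - t • y‖ + (1 - t) * ‖y‖ := by
            rw [h1]
            refine (norm_sub_le _ _).trans ?_
            rw [norm_smul, Real.norm_of_nonneg (by linarith [ht.2])]
          have h3 : d < 1 - t := by
            have := ht.2
            rw [hdd]
            nlinarith
          have h4 : (1 - t) ∈ Set.Ioi d := h3
          simp only [F, Set.indicator_of_mem h4]
          exact le_refl _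
        · exact zero_le
    _ ≤ ∫⁻ t, F (1 - t) := setLIntegral_le_lintegral _ _
    _ = ∫⁻ r, F r := lintegral_sub_left_eq_self F 1
    _ = ∫⁻ r in Set.Ioi d, ENNReal.ofReal (r ^ (-(n : ℝ) - 1)) :=
        lintegral_indicator measurableSet_Ioi _
    _ = ENNReal.ofReal (∫ r in Set.Ioi d, r ^ (-(n : ℝ) - 1)) := by
        rw [ofReal_integral_eq_lintegral_ofReal (integrableOn_Ioi_rpow_of_lt hexp hd0)]
        refine (ae_restrict_mem measurableSet_Ioi).mono ?_
        intro r hr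
        exact Real.rpow_nonneg (hd0.trans hr).le _
    _ ≤ _ := by
        rw [integral_Ioi_rpow_of_lt hexp hd0]
        apply le_of_eq
        congr 1
        have : -(n : ℝ) - 1 + 1 = -(n : ℝ) := by ring
        rw [this, Real.rpow_neg hd0.le, Real.rpow_natCast, hdd, div_pow]
        field_simp
end

section
/- Let n ≥ 1 be an integer and let B be the open unit ball of ℝⁿ with Lebesgue measure. There exists a constant C > 0, depending only on n, such that for every Young function φ and every measurable function u : ℝⁿ → [0,∞] vanishing outside B, the function Tu defined on B by Tu(y) = ∫_B ‖z − y‖^{1−n} u(z) dz satisfies ‖Tu‖_{L^φ(B)} ≤ C·‖u‖_{L^φ(B)}, where ‖·‖_{L^φ(B)} denotes the Luxembourg norm with respect to Lebesgue measure on B. -/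
open MeasureTheory
open scoped ENNReal

/-- The Luxembourg norm of a `[0,∞]`-valued function:
`‖f‖_{L^φ} = inf {γ > 0 : ∫ φ(f/γ) dμ ≤ 1}` (with `inf ∅ = ∞`, and where
`φ(f(z)/γ) = ∞` whenever `f(z) = ∞`). -/
noncomputable def luxNormENN {Z : Type*} [MeasurableSpace Z] (μ : Measure Z) (φ : ℝ → ℝ)
    (f : Z → ℝ≥0∞) : ℝ≥0∞ :=
  sInf (ENNReal.ofReal ''
    {γ : ℝ | 0 < γ ∧
      ∫⁻ z, (if f z = ⊤ then ⊤ else ENNReal.ofReal (φ ((f z).toReal / γ))) ∂μ ≤ 1})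

/-- Supporting line at a positive point. -/
lemma aux_support {ψ : ℝ → ℝ} (hc : ConvexOn ℝ Set.univ ψ) (h0 : ψ 0 = 0) (hpos : ∀ t, 0 ≤ ψ t)
    (t₀ : ℝ) (ht : 0 < t₀) :
    ∃ a b : ℝ, 0 ≤ a ∧ 0 ≤ b ∧ a * t₀ = ψ t₀ + b ∧ ∀ t, a * t ≤ ψ t + b := by
  have key : ∃ a : ℝ, ∀ t, a * (t - t₀) ≤ ψ t - ψ t₀ := by
    refine ⟨derivWithin ψ (Set.Ioi t₀) t₀, fun t => ?_⟩
    rcases lt_trichotomy t t₀ with h | h | h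
    · have h1 := hc.slope_le_leftDeriv_of_mem_interior (Set.mem_univ t)
        (show t₀ ∈ interior Set.univ by simp) h
      have h2 := hc.leftDeriv_le_rightDeriv_of_mem_interior
        (show t₀ ∈ interior Set.univ by simp)
      have h3 := h1.trans h2
      rw [slope_def_field, div_le_iff₀ (by linarith)] at h3
      linarith
    · subst h; simp
    · have h1 := hc.rightDeriv_le_slope_of_mem_interior
        (show t₀ ∈ interior Set.univ by simp) (Set.mem_univ t) h
      rw [slope_def_field, le_div_iff₀ (by linarith)] at h1
      linarith
  obtain ⟨a, ha⟩ := key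
  have hb : 0 ≤ a * t₀ - ψ t₀ := by have := ha 0; rw [h0] at this; linarith
  refine ⟨a, a * t₀ - ψ t₀, ?_, hb, by ring, fun t => by linarith [ha t]⟩
  by_contra hneg
  push Not at hneg
  nlinarith [hpos t₀]

noncomputable def extY (ψ : ℝ → ℝ) (x : ℝ≥0∞) : ℝ≥0∞ :=
  if x = ⊤ then ⊤ else ENNReal.ofReal (ψ x.toReal)

lemma extY_measurable {ψ : ℝ → ℝ} (hc : ConvexOn ℝ Set.univ ψ) : Measurable (extY ψ) := by
  have hcont : Continuous ψ := by
    rw [← continuousOn_univ]; exact hc.continuousOn isOpen_univ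
  unfold extY
  refine Measurable.ite (measurableSet_singleton _) measurable_const ?_
  exact (hcont.measurable.comp ENNReal.measurable_toReal).ennreal_ofReal

lemma aux_line_le {ψ : ℝ → ℝ} (hpos : ∀ t, 0 ≤ ψ t) {a b : ℝ} (ha : 0 ≤ a) (hb : 0 ≤ b)
    (h : ∀ t, a * t ≤ ψ t + b) (x : ℝ≥0∞) :
    ENNReal.ofReal a * x ≤ extY ψ x + ENNReal.ofReal b := by
  unfold extY
  split_ifs with hx
  · simp
  · rw [← ENNReal.ofReal_add (hpos _) hb]
    conv_lhs => rw [← ENNReal.ofReal_toReal hx]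
    rw [← ENNReal.ofReal_mul ha]
    exact ENNReal.ofReal_le_ofReal (h _)

/-- Jensen for sub-probability measures. -/
lemma aux_jensen {Z : Type*} [MeasurableSpace Z] (ν : Measure Z) (hν : ν Set.univ ≤ 1)
    {ψ : ℝ → ℝ} (hc : ConvexOn ℝ Set.univ ψ) (hpos : ∀ t, 0 ≤ ψ t) (h0 : ∀ t, ψ t = 0 ↔ t = 0)
    (u : Z → ℝ≥0∞) (hu : Measurable u) :
    extY ψ (∫⁻ z, u z ∂ν) ≤ ∫⁻ z, extY ψ (u z) ∂ν := by
  have h00 : ψ 0 = 0 := (h0 0).2 rfl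
  have main : ∀ a b : ℝ, 0 ≤ a → 0 ≤ b → (∀ t, a * t ≤ ψ t + b) →
      ENNReal.ofReal a * ∫⁻ z, u z ∂ν ≤ ∫⁻ z, extY ψ (u z) ∂ν + ENNReal.ofReal b := by
    intro a b ha hb h
    rw [← lintegral_const_mul _ hu]
    calc ∫⁻ z, ENNReal.ofReal a * u z ∂ν
        ≤ ∫⁻ z, (extY ψ (u z) + ENNReal.ofReal b) ∂ν :=
          lintegral_mono fun z => aux_line_le hpos ha hb h _
      _ = ∫⁻ z, extY ψ (u z) ∂ν + ENNReal.ofReal b * ν Set.univ := by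
          rw [lintegral_add_right _ measurable_const, lintegral_const]
      _ ≤ _ := by
          gcongr
          exact mul_le_of_le_one_right' hν
  by_cases hT : ∫⁻ z, u z ∂ν = ⊤
  · obtain ⟨a, b, ha, hb, hab, h⟩ := aux_support hc h00 hpos 1 one_pos
    have hψ1 : ψ 1 ≠ 0 := fun h => one_ne_zero ((h0 1).1 h)
    have hψ1' : 0 < ψ 1 := lt_of_le_of_ne (hpos 1) hψ1.symm
    have ha' : 0 < a := by linarith
    have := main a b ha hb h
    rw [hT, ENNReal.mul_top (by simpa using ha'), top_le_iff, ENNReal.add_eq_top] at this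
    rcases this with h1 | h1
    · rw [h1]; exact le_top
    · exact absurd h1 ENNReal.ofReal_ne_top
  · set t₀ := (∫⁻ z, u z ∂ν).toReal with ht₀
    have hE : extY ψ (∫⁻ z, u z ∂ν) = ENNReal.ofReal (ψ t₀) := by
      unfold extY; rw [if_neg hT]
    rw [hE]
    rcases (ENNReal.toReal_nonneg : 0 ≤ t₀).eq_or_lt with hz | hp
    · have hz' : t₀ = 0 := hz.symm
      rw [hz', h00]; simp
    · obtain ⟨a, b, ha, hb, hab, h⟩ := aux_support hc h00 hpos t₀ hp
      have := main a b ha hb h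
      rw [← ENNReal.ofReal_toReal hT, ← ht₀, ← ENNReal.ofReal_mul ha, hab,
        ENNReal.ofReal_add (hpos _) hb] at this
      exact (ENNReal.add_le_add_iff_right ENNReal.ofReal_ne_top).1 this

lemma aux_kernel_meas (n : ℕ) : Measurable (fun p : EuclideanSpace ℝ (Fin n) ×
    EuclideanSpace ℝ (Fin n) => ENNReal.ofReal (‖p.1 - p.2‖ ^ (1 - (n : ℝ)))) := by
  have : Measurable (fun p : EuclideanSpace ℝ (Fin n) ×
    EuclideanSpace ℝ (Fin n) => ‖p.1 - p.2‖) := by fun_prop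
  exact (this.pow_const _).ennreal_ofReal

lemma aux_kernel_int (n : ℕ) (hn : 1 ≤ n) :
    ∫⁻ w in Metric.ball (0 : EuclideanSpace ℝ (Fin n)) 2,
      ENNReal.ofReal (‖w‖ ^ (1 - (n : ℝ))) ≠ ⊤ := by
  have : Nonempty (Fin n) := ⟨⟨0, hn⟩⟩
  have : IntegrableOn (fun w : EuclideanSpace ℝ (Fin n) => ‖w‖ ^ (1 - (n : ℝ)))
      (Metric.ball 0 2) volume := by
    rw [integrableOn_fun_norm_addHaar volume (f := fun r : ℝ => r ^ (1 - (n : ℝ)))]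
    have h1 : IntegrableOn (fun _ : ℝ => (1 : ℝ)) (Set.Ioo 0 2) := by
      simp
    refine h1.congr_fun (fun y hy => ?_) measurableSet_Ioo
    have hy0 : 0 < y := hy.1
    simp only [finrank_euclideanSpace, Fintype.card_fin, smul_eq_mul]
    rw [← Real.rpow_natCast, ← Real.rpow_add hy0, Nat.cast_sub hn]
    simp
  exact this.lintegral_lt_top.ne

lemma aux_kernel_bound (n : ℕ) (y : EuclideanSpace ℝ (Fin n))
    (hy : y ∈ Metric.ball (0 : EuclideanSpace ℝ (Fin n)) 1) :
    ∫⁻ z in Metric.ball (0 : EuclideanSpace ℝ (Fin n)) 1,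
      ENNReal.ofReal (‖z - y‖ ^ (1 - (n : ℝ))) ≤
    ∫⁻ w in Metric.ball (0 : EuclideanSpace ℝ (Fin n)) 2,
      ENNReal.ofReal (‖w‖ ^ (1 - (n : ℝ))) := by
  rw [← lintegral_indicator measurableSet_ball, ← lintegral_indicator measurableSet_ball,
    ← lintegral_sub_right_eq_self ((Metric.ball (0 : EuclideanSpace ℝ (Fin n)) 2).indicator _) y]
  refine lintegral_mono fun z => ?_
  by_cases hz : z ∈ Metric.ball (0 : EuclideanSpace ℝ (Fin n)) 1
  · have : z - y ∈ Metric.ball (0 : EuclideanSpace ℝ (Fin n)) 2 := by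
      rw [mem_ball_zero_iff] at *
      linarith [norm_sub_le z y]
    simp [Set.indicator_of_mem hz, Set.indicator_of_mem this]
  · simp [Set.indicator_of_notMem hz]

lemma aux_main (n : ℕ) (B : Set (EuclideanSpace ℝ (Fin n))) (hB : MeasurableSet B)
    (k : EuclideanSpace ℝ (Fin n) → EuclideanSpace ℝ (Fin n) → ℝ≥0∞)
    (hkm : Measurable (fun p : EuclideanSpace ℝ (Fin n) × EuclideanSpace ℝ (Fin n) =>
      k p.1 p.2))
    (C : ℝ) (hC : 0 < C)
    (hkb : ∀ y ∈ B, ∫⁻ z in B, k z y ≤ ENNReal.ofReal C)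
    (hkb' : ∀ z ∈ B, ∫⁻ y in B, k z y ≤ ENNReal.ofReal C)
    (φ : ℝ → ℝ) (hconv : ConvexOn ℝ Set.univ φ) (hpos : ∀ t, 0 ≤ φ t)
    (hzero : ∀ t, φ t = 0 ↔ t = 0)
    (u : EuclideanSpace ℝ (Fin n) → ℝ≥0∞) (hu : Measurable u) (γ : ℝ) (hγ : 0 < γ)
    (hint : ∫⁻ z in B, (if u z = ⊤ then ⊤ else ENNReal.ofReal (φ ((u z).toReal / γ))) ≤ 1) :
    ∫⁻ y in B, (if (∫⁻ z in B, k z y * u z) = ⊤ then ⊤ else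
      ENNReal.ofReal (φ ((∫⁻ z in B, k z y * u z).toReal / (C * γ)))) ≤ 1 := by
  obtain ⟨c, hc⟩ : ∃ c, c = ENNReal.ofReal C := ⟨_, rfl⟩
  rw [← hc] at hkb hkb'
  have hc0 : c ≠ 0 := by simpa [hc] using hC
  have hct : c ≠ ⊤ := hc ▸ ENNReal.ofReal_ne_top
  set ψ : ℝ → ℝ := fun t => φ (t / γ) with hψ
  have hψc : ConvexOn ℝ Set.univ ψ := by
    have := hconv.comp_linearMap (LinearMap.mulRight ℝ γ⁻¹)
    simpa [hψ, Function.comp_def, div_eq_mul_inv] using this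
  have hψpos : ∀ t, 0 ≤ ψ t := fun t => hpos _
  have hψ0 : ∀ t, ψ t = 0 ↔ t = 0 := fun t => by
    rw [hψ]; simp only; rw [hzero]; simp [hγ.ne']
  have hint' : ∫⁻ z in B, extY ψ (u z) ≤ 1 := hint
  have hkm1 : ∀ y, Measurable (fun z => k z y) := fun y =>
    hkm.comp (measurable_id.prodMk measurable_const)
  have hEu : Measurable (fun z => extY ψ (u z)) := (extY_measurable hψc).comp hu
  have hJ : ∀ y ∈ B, (if (∫⁻ z in B, k z y * u z) = ⊤ then ⊤ else
      ENNReal.ofReal (φ ((∫⁻ z in B, k z y * u z).toReal / (C * γ)))) ≤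
      c⁻¹ * ∫⁻ z in B, k z y * extY ψ (u z) := by
    intro y hy
    set ν : Measure (EuclideanSpace ℝ (Fin n)) :=
      c⁻¹ • (volume.restrict B).withDensity (fun z => k z y) with hν
    have hνi : ∀ f : EuclideanSpace ℝ (Fin n) → ℝ≥0∞, Measurable f →
        ∫⁻ z, f z ∂ν = c⁻¹ * ∫⁻ z in B, k z y * f z := by
      intro f hf
      rw [hν, lintegral_smul_measure, lintegral_withDensity_eq_lintegral_mul _ (hkm1 y) hf]
      rfl
    have hν1 : ν Set.univ ≤ 1 := by
      rw [hν, Measure.smul_apply, withDensity_apply _ MeasurableSet.univ, Measure.restrict_univ,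
        smul_eq_mul]
      calc c⁻¹ * ∫⁻ z in B, k z y ≤ c⁻¹ * c := by gcongr; exact hkb y hy
        _ = 1 := ENNReal.inv_mul_cancel hc0 hct
    have := aux_jensen ν hν1 hψc hψpos hψ0 u hu
    rw [hνi u hu, hνi _ hEu] at this
    refine le_trans (le_of_eq ?_) this
    unfold extY
    by_cases hT : (∫⁻ z in B, k z y * u z) = ⊤
    · rw [if_pos hT, if_pos]
      rw [hT]; exact ENNReal.mul_top (by simpa using hct)
    · rw [if_neg hT, if_neg (ENNReal.mul_ne_top (by simpa using hc0) hT)]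
      simp only [hψ]
      rw [ENNReal.toReal_mul, ENNReal.toReal_inv, hc, ENNReal.toReal_ofReal hC.le]
      congr 2
      field_simp
  calc _ ≤ ∫⁻ y in B, c⁻¹ * ∫⁻ z in B, k z y * extY ψ (u z) :=
        setLIntegral_mono' hB hJ
    _ = c⁻¹ * ∫⁻ y in B, ∫⁻ z in B, k z y * extY ψ (u z) :=
        lintegral_const_mul' _ _ (by simpa using hc0)
    _ = c⁻¹ * ∫⁻ z in B, ∫⁻ y in B, k z y * extY ψ (u z) := by
        rw [lintegral_lintegral_swap]
        exact ((hkm.comp measurable_swap).mul (hEu.comp measurable_snd)).aemeasurable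
    _ ≤ c⁻¹ * ∫⁻ z in B, c * extY ψ (u z) := by
        gcongr c⁻¹ * ?_
        refine setLIntegral_mono' hB fun z hz => ?_
        have hkz : Measurable (fun y => k z y) :=
          hkm.comp (measurable_const.prodMk measurable_id)
        rw [lintegral_mul_const _ hkz]
        gcongr
        exact hkb' z hz
    _ = ∫⁻ z in B, extY ψ (u z) := by
        rw [lintegral_const_mul _ hEu, ← mul_assoc, ENNReal.inv_mul_cancel hc0 hct, one_mul]
    _ ≤ 1 := hint'

/-- the Riesz-potential-type operator `Tu(y) = ∫_B ‖z−y‖^{1−n} u(z) dz` on the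
unit ball `B ⊆ ℝⁿ` is bounded on `L^φ(B)`, with a constant depending only on `n`
(uniform in the Young function `φ`). -/
theorem riesz_potential_luxNorm_bound (n : ℕ) (hn : 1 ≤ n) :
    ∃ C : ℝ, 0 < C ∧
      ∀ φ : ℝ → ℝ, IsYoung φ →
        ∀ u : EuclideanSpace ℝ (Fin n) → ℝ≥0∞, Measurable u →
          (∀ x ∉ Metric.ball (0 : EuclideanSpace ℝ (Fin n)) 1, u x = 0) →
          luxNormENN (volume.restrict (Metric.ball (0 : EuclideanSpace ℝ (Fin n)) 1)) φ
              (fun y => ∫⁻ z in Metric.ball (0 : EuclideanSpace ℝ (Fin n)) 1,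
                ENNReal.ofReal (‖z - y‖ ^ (1 - (n : ℝ))) * u z) ≤
            ENNReal.ofReal C *
              luxNormENN (volume.restrict (Metric.ball (0 : EuclideanSpace ℝ (Fin n)) 1))
                φ u := by
  set B := Metric.ball (0 : EuclideanSpace ℝ (Fin n)) 1 with hB
  set K := ∫⁻ w in Metric.ball (0 : EuclideanSpace ℝ (Fin n)) 2,
      ENNReal.ofReal (‖w‖ ^ (1 - (n : ℝ))) with hK
  have hKtop : K ≠ ⊤ := aux_kernel_int n hn
  set C : ℝ := K.toReal + 1 with hCdef
  have hC : 0 < C := by positivity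
  have hKC : K ≤ ENNReal.ofReal C := by
    rw [← ENNReal.ofReal_toReal hKtop]
    exact ENNReal.ofReal_le_ofReal (by linarith)
  set c : ℝ≥0∞ := ENNReal.ofReal C with hc
  have hc0 : c ≠ 0 := by simpa [hc] using hC
  have hct : c ≠ ⊤ := ENNReal.ofReal_ne_top
  have hkb : ∀ y ∈ B, ∫⁻ z in B, ENNReal.ofReal (‖z - y‖ ^ (1 - (n : ℝ))) ≤ c := fun y hy =>
    (aux_kernel_bound n y hy).trans hKC
  have hkb' : ∀ z ∈ B, ∫⁻ y in B, ENNReal.ofReal (‖z - y‖ ^ (1 - (n : ℝ))) ≤ c := fun z hz => by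
    refine le_trans (le_of_eq ?_) (hkb z hz)
    refine lintegral_congr fun y => ?_
    rw [norm_sub_rev]
  refine ⟨C, hC, ?_⟩
  intro φ hφ u hu _
  obtain ⟨_, hconv, hpos, hzero⟩ := hφ
  unfold luxNormENN
  rw [sInf_eq_iInf', sInf_eq_iInf', ENNReal.mul_iInf_of_ne hc0 hct]
  refine le_iInf ?_
  rintro ⟨_, γ, ⟨hγ, hint⟩, rfl⟩
  refine iInf_le_of_le ⟨ENNReal.ofReal (C * γ), C * γ, ⟨by positivity, ?_⟩, rfl⟩
    (ENNReal.ofReal_mul hC.le).le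
  exact aux_main n B measurableSet_ball
    (fun z y => ENNReal.ofReal (‖z - y‖ ^ (1 - (n : ℝ)))) (aux_kernel_meas n) C hC hkb hkb'
    φ hconv hpos hzero u hu γ hγ hint
end

section
/- Let n ≥ 1 be an integer and let B be the open unit ball of ℝⁿ with Lebesgue measure, and let ½B = B(0, 1/2). There exists a constant C > 0, depending only on n, such that for every Young function φ and every continuously differentiable function f : B → ℝ, one has ‖f − a‖_{L^φ(B)} ≤ C·‖ y ↦ ‖Df(y)‖ ‖_{L^φ(B)}, where a = (1/Vol(½B))·∫_{½B} f(x) dx, Df(y) denotes the (Fréchet) derivative of f at y with its operator norm, and ‖·‖_{L^φ(B)} denotes the Luxembourg norm with respect to Lebesgue measure on B. -/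
open MeasureTheory
open scoped ENNReal

open Metric Set in
theorem young_le {φ : ℝ → ℝ} (h : IsYoung φ) {s r K : ℝ} (hK : 1 ≤ K) (hr : 0 ≤ r)
    (hs : |s| ≤ r / K) : φ s ≤ φ r / K := by
  obtain ⟨he, hc, hn, h0⟩ := h
  have hK0 : 0 < K := by linarith
  have e : φ s = φ |s| := by
    rcases abs_cases s with h | h <;> rw [h.1]
    rw [he]
  rcases hr.eq_or_lt with rfl | hr
  · have : s = 0 := by simpa using hs
    subst this
    rw [(h0 0).2 rfl]; simp
  have hle : |s| / r ≤ 1 / K := by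
    rw [div_le_div_iff₀ hr hK0]
    rw [le_div_iff₀ hK0] at hs
    linarith
  have hK1 : 1 / K ≤ 1 := by
    rw [div_le_one hK0]; exact hK
  have := hc.2 (mem_univ r) (mem_univ 0) (show 0 ≤ |s| / r by positivity)
    (show 0 ≤ 1 - |s| / r by linarith) (by ring)
  simp only [smul_eq_mul, mul_zero, add_zero, (h0 0).2 rfl] at this
  rw [div_mul_cancel₀ _ hr.ne'] at this
  rw [e]
  calc _ ≤ _ := this
    _ ≤ 1 / K * φ r := by gcongr; exact hn r
    _ = _ := by ring

open Metric Set in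
theorem jensen_lint {X : Type*} [TopologicalSpace X] [T2Space X] [MeasurableSpace X]
    [BorelSpace X] (μ : Measure X) [IsFiniteMeasureOnCompacts μ] {φ : ℝ → ℝ} (h : IsYoung φ)
    {t K : Set X} (hK : IsCompact K) (htK : t ⊆ K) (h0 : μ t ≠ 0)
    {u : X → ℝ} (hu : ContinuousOn u K) :
    ENNReal.ofReal (φ (⨍ x in t, u x ∂μ)) ≤
      (μ t)⁻¹ * ∫⁻ x in t, ENNReal.ofReal (φ (u x)) ∂μ := by
  obtain ⟨he, hc, hn, -⟩ := h
  have hcont : Continuous φ := by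
    rw [← continuousOn_univ]; exact hc.continuousOn isOpen_univ
  have hi1 : IntegrableOn u t μ := (hu.integrableOn_compact hK).mono_set htK
  have hi2 : IntegrableOn (φ ∘ u) t μ :=
    ((hcont.comp_continuousOn hu).integrableOn_compact hK).mono_set htK
  have ht : μ t ≠ ∞ := ((measure_mono htK).trans_lt hK.measure_lt_top).ne
  have := hc.map_set_average_le hcont.continuousOn isClosed_univ h0 ht (by simp) hi1 hi2
  refine (ENNReal.ofReal_le_ofReal this).trans ?_
  have e := ofReal_setAverage hi2 (by filter_upwards with x; exact hn _)
  simp only [Function.comp] at e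
  rw [e, ENNReal.div_eq_inv_mul]

open Metric Set in
theorem line_cov {n : ℕ} (H : EuclideanSpace ℝ (Fin n) → ℝ≥0∞) (hH : Measurable H)
    (c : EuclideanSpace ℝ (Fin n)) {r : ℝ} (hr : 1 / 2 ≤ r) :
    ∫⁻ x, H (r • x + c) ≤ ENNReal.ofReal (2 ^ n) * ∫⁻ z, H z := by
  have hr0 : 0 < r := by linarith
  have h1 : ∫⁻ x, H (r • x + c) = ∫⁻ x, H (x + c) ∂(Measure.map (r • ·) volume) := by
    rw [lintegral_map (by fun_prop) (by fun_prop)]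
  rw [h1, Measure.map_addHaar_smul _ hr0.ne', lintegral_smul_measure,
    lintegral_add_right_eq_self (fun x => H x) c, smul_eq_mul]
  gcongr
  rw [finrank_euclideanSpace_fin, abs_of_pos (by positivity), ← inv_pow]
  gcongr
  rw [inv_le_comm₀ hr0 (by norm_num)]
  linarith

open Metric Set in
theorem triple_le {n : ℕ} (H : EuclideanSpace ℝ (Fin n) → ℝ≥0∞) (hH : Measurable H) :
    ∫⁻ y in ball (0 : EuclideanSpace ℝ (Fin n)) 1,
      ∫⁻ x in ball (0 : EuclideanSpace ℝ (Fin n)) (1 / 2),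
        ∫⁻ t in Ioc (0 : ℝ) 1, H (x + t • (y - x)) ≤
      ENNReal.ofReal (4 ^ n) * volume (ball (0 : EuclideanSpace ℝ (Fin n)) (1 / 2)) *
        ∫⁻ z in ball (0 : EuclideanSpace ℝ (Fin n)) 1, H z := by
  set B := ball (0 : EuclideanSpace ℝ (Fin n)) 1 with hB
  set B' := ball (0 : EuclideanSpace ℝ (Fin n)) (1 / 2) with hB'
  have hBB : B' ⊆ B := ball_subset_ball (by norm_num)
  have hmB : MeasurableSet B := measurableSet_ball
  have hmB' : MeasurableSet B' := measurableSet_ball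
  have hvol : ENNReal.ofReal (4 ^ n) * volume B' = ENNReal.ofReal (2 ^ n) * volume B := by
    rw [hB', Measure.addHaar_ball_of_pos volume _ (by norm_num : (0 : ℝ) < 1 / 2),
      finrank_euclideanSpace_fin, ← mul_assoc, ← ENNReal.ofReal_mul (by positivity), ← mul_pow]
    norm_num
    rfl
  set G := B.indicator H with hG
  have hGm : Measurable G := hH.indicator hmB
  have hGi : ∫⁻ z, G z = ∫⁻ z in B, H z := lintegral_indicator hmB _
  have key : ∀ y ∈ B, ∀ x ∈ B', ∀ t ∈ Ioc (0 : ℝ) 1,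
      H (x + t • (y - x)) = G (x + t • (y - x)) := by
    intro y hy x hx t ht
    rw [hG, indicator_of_mem]
    exact (convex_ball _ _).add_smul_sub_mem (hBB hx) hy ⟨ht.1.le, ht.2⟩
  have hslice : ∀ t ∈ Ioc (0 : ℝ) 1, ∫⁻ y in B, ∫⁻ x in B', G (x + t • (y - x)) ≤
      ENNReal.ofReal (2 ^ n) * volume B * ∫⁻ z, G z := by
    intro t ht
    rcases le_total t (1 / 2) with h | h
    · calc ∫⁻ y in B, ∫⁻ x in B', G (x + t • (y - x))
          ≤ ∫⁻ y in B, ENNReal.ofReal (2 ^ n) * ∫⁻ z, G z := by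
            refine lintegral_mono fun y => ?_
            refine (setLIntegral_le_lintegral _ _).trans ?_
            refine le_trans (le_of_eq ?_) (line_cov G hGm (t • y) (r := 1 - t) (by linarith))
            congr 1; ext x; congr 1; module
        _ = _ := by rw [setLIntegral_const]; ring
    · rw [lintegral_lintegral_swap (by unfold Function.uncurry; fun_prop)]
      calc ∫⁻ x in B', ∫⁻ y in B, G (x + t • (y - x))
          ≤ ∫⁻ x in B', ENNReal.ofReal (2 ^ n) * ∫⁻ z, G z := by
            refine lintegral_mono fun x => ?_
            refine (setLIntegral_le_lintegral _ _).trans ?_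
            refine le_trans (le_of_eq ?_) (line_cov G hGm ((1 - t) • x) (r := t) (by linarith))
            congr 1; ext y; congr 1; module
        _ = ENNReal.ofReal (2 ^ n) * volume B' * ∫⁻ z, G z := by rw [setLIntegral_const]; ring
        _ ≤ _ := by gcongr
  have hm3 : Measurable (fun p : (EuclideanSpace ℝ (Fin n) × EuclideanSpace ℝ (Fin n)) × ℝ =>
      G (p.1.2 + p.2 • (p.1.1 - p.1.2))) := hGm.comp (by fun_prop)
  calc _ = ∫⁻ y in B, ∫⁻ x in B', ∫⁻ t in Ioc (0 : ℝ) 1, G (x + t • (y - x)) := by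
        refine setLIntegral_congr_fun hmB fun y hy => ?_
        refine setLIntegral_congr_fun hmB' fun x hx => ?_
        exact setLIntegral_congr_fun measurableSet_Ioc fun t ht => key y hy x hx t ht
    _ = ∫⁻ y in B, ∫⁻ t in Ioc (0 : ℝ) 1, ∫⁻ x in B', G (x + t • (y - x)) := by
        refine lintegral_congr fun y => ?_
        refine lintegral_lintegral_swap ?_
        exact (hm3.comp (f := fun p : EuclideanSpace ℝ (Fin n) × ℝ => ((y, p.1), p.2))
          (by fun_prop)).aemeasurable
    _ = ∫⁻ t in Ioc (0 : ℝ) 1, ∫⁻ y in B, ∫⁻ x in B', G (x + t • (y - x)) := by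
        refine lintegral_lintegral_swap ?_
        refine Measurable.aemeasurable ?_
        exact Measurable.lintegral_prod_right'
          (f := fun q : (EuclideanSpace ℝ (Fin n) × ℝ) × EuclideanSpace ℝ (Fin n) =>
            G (q.2 + q.1.2 • (q.1.1 - q.2)))
          (hm3.comp (f := fun q : (EuclideanSpace ℝ (Fin n) × ℝ) × EuclideanSpace ℝ (Fin n) =>
            ((q.1.1, q.2), q.1.2)) (by fun_prop))
    _ ≤ ∫⁻ t in Ioc (0 : ℝ) 1, ENNReal.ofReal (2 ^ n) * volume B * ∫⁻ z, G z :=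
        setLIntegral_mono' measurableSet_Ioc hslice
    _ = _ := by
        rw [setLIntegral_const, hvol, hGi]; simp

open Metric Set in
theorem pt_le {n : ℕ} {φ : ℝ → ℝ} (h : IsYoung φ) {f : EuclideanSpace ℝ (Fin n) → ℝ}
    (hf : ContDiffOn ℝ 1 f (ball (0 : EuclideanSpace ℝ (Fin n)) 1)) {γ K : ℝ} (hγ : 0 < γ)
    (hK : 1 ≤ K) {x y : EuclideanSpace ℝ (Fin n)}
    (hx : x ∈ ball (0 : EuclideanSpace ℝ (Fin n)) 1)
    (hy : y ∈ ball (0 : EuclideanSpace ℝ (Fin n)) 1) :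
    ENNReal.ofReal (φ ((f y - f x) / (2 * K * γ))) ≤
      ∫⁻ t in Ioc (0 : ℝ) 1, ENNReal.ofReal K⁻¹ *
        ENNReal.ofReal (φ (‖fderiv ℝ f (x + t • (y - x))‖ / γ)) := by
  have hK0 : 0 < K := by linarith
  have hmem : ∀ t ∈ Icc (0 : ℝ) 1, x + t • (y - x) ∈ ball (0 : EuclideanSpace ℝ (Fin n)) 1 :=
    fun t ht => (convex_ball _ _).add_smul_sub_mem hx hy ht
  have hfc : ContinuousOn (fderiv ℝ f) (ball (0 : EuclideanSpace ℝ (Fin n)) 1) :=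
    hf.continuousOn_fderiv_of_isOpen isOpen_ball le_rfl
  have hcd : ContinuousOn (fun t : ℝ => fderiv ℝ f (x + t • (y - x)) (y - x)) (Icc 0 1) :=
    (hfc.comp (t := ball (0 : EuclideanSpace ℝ (Fin n)) 1)
      (f := fun t : ℝ => x + t • (y - x)) (by fun_prop) hmem).clm_apply continuousOn_const
  have ftc : ∫ t in (0 : ℝ)..1, fderiv ℝ f (x + t • (y - x)) (y - x) = f y - f x := by
    have := intervalIntegral.integral_eq_sub_of_hasDerivAt (a := 0) (b := 1)
      (f := fun t : ℝ => f (x + t • (y - x)))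
      (f' := fun t : ℝ => fderiv ℝ f (x + t • (y - x)) (y - x)) ?_ ?_
    · simpa using this
    · intro t ht
      rw [uIcc_of_le zero_le_one] at ht
      have hd : DifferentiableAt ℝ f (x + t • (y - x)) :=
        (hf.differentiableOn one_ne_zero).differentiableAt (isOpen_ball.mem_nhds (hmem t ht))
      have hl : HasDerivAt (fun t : ℝ => x + t • (y - x)) (y - x) t := by
        simpa using ((hasDerivAt_id t).smul_const (y - x)).const_add x
      exact hd.hasFDerivAt.comp_hasDerivAt t hl
    · apply ContinuousOn.intervalIntegrable
      rwa [uIcc_of_le zero_le_one]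
  have hav : (f y - f x) / (2 * K * γ) =
      ⨍ t in Ioc (0 : ℝ) 1, fderiv ℝ f (x + t • (y - x)) (y - x) / (2 * K * γ) := by
    rw [setAverage_eq, integral_div, ← ftc, intervalIntegral.integral_of_le zero_le_one]
    simp
  rw [hav]
  refine (jensen_lint volume h isCompact_Icc Ioc_subset_Icc_self (by simp)
    (hcd.div_const _)).trans ?_
  simp only [Real.volume_Ioc, sub_zero, ENNReal.ofReal_one, inv_one, one_mul]
  refine lintegral_mono fun t => ?_
  rw [← ENNReal.ofReal_mul (by positivity)]
  apply ENNReal.ofReal_le_ofReal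
  refine (young_le h hK (r := ‖fderiv ℝ f (x + t • (y - x))‖ / γ) (by positivity) ?_).trans
    (le_of_eq (by ring))
  have hxy : ‖y - x‖ ≤ 2 := by
    rw [mem_ball_zero_iff] at hx hy
    linarith [norm_sub_le y x]
  have h2 := (fderiv ℝ f (x + t • (y - x))).le_opNorm (y - x)
  rw [Real.norm_eq_abs] at h2
  rw [abs_div, abs_of_pos (show 0 < 2 * K * γ by positivity), div_div,
    div_le_div_iff₀ (by positivity) (by positivity)]
  have h3 : |fderiv ℝ f (x + t • (y - x)) (y - x)| ≤ ‖fderiv ℝ f (x + t • (y - x))‖ * 2 :=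
    h2.trans (by gcongr)
  calc _ ≤ ‖fderiv ℝ f (x + t • (y - x))‖ * 2 * (γ * K) := by gcongr
    _ = _ := by ring

open Metric Set in
theorem main_bound {n : ℕ} {φ : ℝ → ℝ} (h : IsYoung φ) {f : EuclideanSpace ℝ (Fin n) → ℝ}
    (hf : ContDiffOn ℝ 1 f (ball (0 : EuclideanSpace ℝ (Fin n)) 1)) {γ : ℝ} (hγ : 0 < γ) :
    ∫⁻ y in ball (0 : EuclideanSpace ℝ (Fin n)) 1, ENNReal.ofReal (φ ((f y -
      (volume (ball (0 : EuclideanSpace ℝ (Fin n)) (1 / 2))).toReal⁻¹ *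
        ∫ x in ball (0 : EuclideanSpace ℝ (Fin n)) (1 / 2), f x) / (2 * 4 ^ n * γ))) ≤
    ∫⁻ y in ball (0 : EuclideanSpace ℝ (Fin n)) 1, ENNReal.ofReal (φ (‖fderiv ℝ f y‖ / γ)) := by
  have hcont : Continuous φ := by
    rw [← continuousOn_univ]; exact h.2.1.continuousOn isOpen_univ
  set B := ball (0 : EuclideanSpace ℝ (Fin n)) 1 with hB
  set B' := ball (0 : EuclideanSpace ℝ (Fin n)) (1 / 2) with hB'
  have hBB : B' ⊆ B := ball_subset_ball (by norm_num)
  have hv0 : volume B' ≠ 0 := (measure_ball_pos _ _ (by norm_num)).ne'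
  have hvt : volume B' ≠ ∞ := measure_ball_lt_top.ne
  set H : EuclideanSpace ℝ (Fin n) → ℝ≥0∞ := fun z => ENNReal.ofReal ((4 : ℝ) ^ n)⁻¹ *
        ENNReal.ofReal (φ (‖fderiv ℝ f z‖ / γ)) with hH
  have hm0 : Measurable fun z => ENNReal.ofReal (φ (‖fderiv ℝ f z‖ / γ)) :=
    (hcont.measurable.comp ((measurable_fderiv ℝ f).norm.div_const γ)).ennreal_ofReal
  have hHm : Measurable H := hm0.const_mul _
  have hcf : ContinuousOn f (closedBall 0 (1 / 2)) :=
    hf.continuousOn.mono (closedBall_subset_ball (by norm_num))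
  have hfi : IntegrableOn f B' :=
    (hcf.integrableOn_compact (isCompact_closedBall _ _)).mono_set ball_subset_closedBall
  have hpt : ∀ y ∈ B, ENNReal.ofReal (φ ((f y - (volume B').toReal⁻¹ *
        ∫ x in B', f x) / (2 * 4 ^ n * γ))) ≤
      (volume B')⁻¹ * ∫⁻ x in B', ∫⁻ t in Ioc (0 : ℝ) 1, H (x + t • (y - x)) := by
    intro y hy
    have hav : (f y - (volume B').toReal⁻¹ * ∫ x in B', f x) / (2 * 4 ^ n * γ) =
        ⨍ x in B', (f y - f x) / (2 * 4 ^ n * γ) := by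
      have hr : (volume B').toReal ≠ 0 := ENNReal.toReal_ne_zero.2 ⟨hv0, hvt⟩
      rw [setAverage_eq, integral_div, integral_sub (show Integrable (fun _ => f y) (volume.restrict B') from integrableOn_const hvt) hfi,
        setIntegral_const, smul_eq_mul, smul_eq_mul, measureReal_def]
      field_simp
    rw [hav]
    refine (jensen_lint volume h (isCompact_closedBall 0 (1 / 2)) ball_subset_closedBall hv0
      ((continuousOn_const.sub hcf).div_const _)).trans ?_
    refine mul_le_mul_right ?_ _
    refine setLIntegral_mono' measurableSet_ball fun x hx => ?_
    exact pt_le h hf hγ (one_le_pow₀ (by norm_num)) (hBB hx) hy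
  calc _ ≤ ∫⁻ y in B, (volume B')⁻¹ * ∫⁻ x in B', ∫⁻ t in Ioc (0 : ℝ) 1, H (x + t • (y - x)) :=
        setLIntegral_mono' measurableSet_ball hpt
    _ = (volume B')⁻¹ * ∫⁻ y in B, ∫⁻ x in B', ∫⁻ t in Ioc (0 : ℝ) 1, H (x + t • (y - x)) :=
        lintegral_const_mul' _ _ (ENNReal.inv_ne_top.2 hv0)
    _ ≤ (volume B')⁻¹ * (ENNReal.ofReal (4 ^ n) * volume B' * ∫⁻ z in B, H z) := by
        gcongr; exact triple_le H hHm
    _ = (volume B')⁻¹ * volume B' * (ENNReal.ofReal (4 ^ n) * ENNReal.ofReal ((4 : ℝ) ^ n)⁻¹) *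
          ∫⁻ y in B, ENNReal.ofReal (φ (‖fderiv ℝ f y‖ / γ)) := by
        rw [hH, lintegral_const_mul _ hm0]; ring
    _ = _ := by
        rw [ENNReal.inv_mul_cancel hv0 hvt, ← ENNReal.ofReal_mul (by positivity),
          mul_inv_cancel₀ (by positivity)]
        simp

/-- the Orlicz–Poincaré inequality on the unit ball `B ⊆ ℝⁿ`: there is a
constant `C > 0` depending only on `n` such that for every Young function `φ` and every
`C¹` function `f` on `B`,
`‖f − (1/Vol(½B)) ∫_{½B} f‖_{L^φ(B)} ≤ C · ‖ y ↦ ‖Df(y)‖ ‖_{L^φ(B)}`. -/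
theorem orlicz_poincare_unit_ball (n : ℕ) (hn : 1 ≤ n) :
    ∃ C : ℝ, 0 < C ∧
      ∀ φ : ℝ → ℝ, IsYoung φ →
        ∀ f : EuclideanSpace ℝ (Fin n) → ℝ,
          ContDiffOn ℝ 1 f (Metric.ball (0 : EuclideanSpace ℝ (Fin n)) 1) →
          luxNorm (volume.restrict (Metric.ball (0 : EuclideanSpace ℝ (Fin n)) 1)) φ
              (fun y => f y -
                (volume (Metric.ball (0 : EuclideanSpace ℝ (Fin n)) (1 / 2))).toReal⁻¹ *
                  ∫ x in Metric.ball (0 : EuclideanSpace ℝ (Fin n)) (1 / 2), f x) ≤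
            ENNReal.ofReal C *
              luxNorm (volume.restrict (Metric.ball (0 : EuclideanSpace ℝ (Fin n)) 1)) φ
                (fun y => ‖fderiv ℝ f y‖) := by
  refine ⟨2 * 4 ^ n, by positivity, fun φ h f hf => ?_⟩
  unfold luxNorm
  have hc : ENNReal.ofReal (2 * 4 ^ n) ≠ 0 := by
    rw [Ne, ENNReal.ofReal_eq_zero, not_le]; positivity
  rw [← ENNReal.div_le_iff' hc ENNReal.ofReal_ne_top]
  refine le_sInf ?_
  rintro _ ⟨γ, ⟨hγ, hle⟩, rfl⟩
  rw [ENNReal.div_le_iff' hc ENNReal.ofReal_ne_top, ← ENNReal.ofReal_mul (by positivity)]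
  exact sInf_le ⟨_, ⟨by positivity, (main_bound h hf hγ).trans hle⟩, rfl⟩
end

section
/- Let G be a topological group with measurable multiplication, and let μ be a nonzero left-invariant Borel measure on G. Let K ⊆ G, let M > 0, and let κ : G → [0,∞) be measurable with κ ≤ M and κ = 0 outside K. Let U ⊆ G be measurable with 0 < μ(U) < ∞, let φ be a Young function, and let s > 0 satisfy μ(U)·φ(s) ≤ 1. Then for every measurable f : G → ℝ, the function g(x) = ∫_G |f(x·z)|·κ(z) dμ(z) satisfies ‖g·𝟙_U‖_{L^φ(μ)} ≤ (M/s)·∫_{U·K} |f| dμ, where U·K = {x·z : x ∈ U, z ∈ K} and ‖·‖_{L^φ(μ)} is the Luxembourg norm with respect to μ. -/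
open MeasureTheory
open scoped ENNReal Pointwise

/-- for a kernel `κ ≤ M` supported in `K`, the convolution
`g(x) = ∫ |f(x·z)| κ(z) dμ(z)` restricted to a set `U` of finite positive measure
satisfies `‖g·𝟙_U‖_{L^φ(μ)} ≤ (M/s)·∫_{U·K} |f| dμ` whenever `s > 0` and
`μ(U)·φ(s) ≤ 1`. -/
theorem local_convolution_luxNorm_bound {G : Type*} [Group G] [TopologicalSpace G]
    [IsTopologicalGroup G] [MeasurableSpace G] [BorelSpace G] [MeasurableMul₂ G]
    (μ : Measure G) [μ.IsMulLeftInvariant] (hμ : μ ≠ 0)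
    (K : Set G) (M : ℝ) (hM : 0 < M)
    (κ : G → ℝ) (hκmeas : Measurable κ) (hκ0 : ∀ z, 0 ≤ κ z)
    (hκM : ∀ z, κ z ≤ M) (hκK : ∀ z ∉ K, κ z = 0)
    (U : Set G) (hUmeas : MeasurableSet U) (hUpos : 0 < μ U) (hUfin : μ U < ⊤)
    (φ : ℝ → ℝ) (hφ : IsYoung φ)
    (s : ℝ) (hs : 0 < s) (hsφ : μ U * ENNReal.ofReal (φ s) ≤ 1)
    (f : G → ℝ) (hf : Measurable f) :
    luxNormENN μ φ
        (U.indicator fun x => ∫⁻ z, ENNReal.ofReal (|f (x * z)| * κ z) ∂μ) ≤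
      ENNReal.ofReal (M / s) * ∫⁻ x in U * K, ENNReal.ofReal |f x| ∂μ := by
  obtain ⟨hev, hconv, hnn, hz⟩ := hφ
  set I : ℝ≥0∞ := ∫⁻ x in U * K, ENNReal.ofReal |f x| ∂μ with hI
  have key : ∀ x ∈ U, ∫⁻ z, ENNReal.ofReal (|f (x * z)| * κ z) ∂μ ≤ ENNReal.ofReal M * I := by
    intro x hx
    have hS : MeasurableSet {z | κ z ≠ 0} := by
      have : MeasurableSet (κ ⁻¹' {0}ᶜ) := hκmeas (measurableSet_singleton 0).compl
      exact this
    have hT : MeasurableSet {y | κ (x⁻¹ * y) ≠ 0} := measurable_const_mul x⁻¹ hS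
    have hTs : {y | κ (x⁻¹ * y) ≠ 0} ⊆ U * K := by
      intro y hy
      refine Set.mem_mul.2 ⟨x, hx, x⁻¹ * y, ?_, by simp⟩
      by_contra h
      exact hy (hκK _ h)
    let F : G → ℝ≥0∞ :=
      {y | κ (x⁻¹ * y) ≠ 0}.indicator fun y => ENNReal.ofReal |f y|
    have hFm : Measurable F := (hf.abs.ennreal_ofReal).indicator hT
    calc ∫⁻ z, ENNReal.ofReal (|f (x * z)| * κ z) ∂μ
        ≤ ∫⁻ z, ENNReal.ofReal M * F (x * z) ∂μ := by
          refine lintegral_mono fun z => ?_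
          by_cases h : κ z = 0
          · simp [h]
          · have : F (x * z) = ENNReal.ofReal |f (x * z)| := by
              simp [F, h]
            rw [this, ← ENNReal.ofReal_mul hM.le]
            apply ENNReal.ofReal_le_ofReal
            rw [mul_comm]
            exact mul_le_mul_of_nonneg_right (hκM z) (abs_nonneg _)
      _ = ENNReal.ofReal M * ∫⁻ z, F (x * z) ∂μ := by
          rw [lintegral_const_mul' _ _ ENNReal.ofReal_ne_top]
      _ = ENNReal.ofReal M * ∫⁻ y, F y ∂μ := by
          rw [lintegral_mul_left_eq_self]
      _ ≤ ENNReal.ofReal M * I := by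
          gcongr
          rw [lintegral_indicator hT]
          exact lintegral_mono_set hTs
  have hmono : ∀ t, 0 ≤ t → t ≤ s → φ t ≤ φ s := by
    intro t ht hts
    have h0 : φ 0 = 0 := (hz 0).2 rfl
    have h := hconv.2 (Set.mem_univ 0) (Set.mem_univ s)
      (sub_nonneg.2 ((div_le_one hs).2 hts)) (div_nonneg ht hs.le) (by ring)
    simp only [smul_eq_mul, mul_zero, zero_add, h0, div_mul_cancel₀ t hs.ne'] at h
    exact h.trans (mul_le_of_le_one_left (hnn s) ((div_le_one hs).2 hts))
  have hMs : 0 < M / s := div_pos hM hs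
  refine le_of_forall_gt fun c hc => ?_
  obtain ⟨r, hr1, hr2⟩ := exists_between hc
  have hItop : I ≠ ⊤ := by
    intro h
    rw [h, ENNReal.mul_top (by simpa using hMs)] at hr1
    exact not_top_lt hr1
  have hrtop : r ≠ ⊤ := hr2.ne_top
  have hr0 : 0 < r.toReal := ENNReal.toReal_pos (bot_le.trans_lt hr1).ne' hrtop
  refine lt_of_le_of_lt (sInf_le ⟨r.toReal, ⟨hr0, ?_⟩, ENNReal.ofReal_toReal hrtop⟩) hr2
  have hb : M * I.toReal ≤ r.toReal * s := by
    have := (ENNReal.toReal_lt_toReal hr1.ne_top hrtop).2 hr1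
    rw [ENNReal.toReal_mul, ENNReal.toReal_ofReal hMs.le, div_mul_eq_mul_div,
      div_lt_iff₀ hs] at this
    exact this.le
  refine le_trans (lintegral_mono (g := U.indicator fun _ => ENNReal.ofReal (φ s)) ?_) ?_
  · intro x
    by_cases hx : x ∈ U
    · have hk := key x hx
      have hfin : ENNReal.ofReal M * I ≠ ⊤ := ENNReal.mul_ne_top ENNReal.ofReal_ne_top hItop
      have hne := ne_top_of_le_ne_top hfin hk
      simp only [Set.indicator_of_mem hx, if_neg hne]
      apply ENNReal.ofReal_le_ofReal
      apply hmono _ (by positivity)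
      rw [div_le_iff₀ hr0, mul_comm]
      refine le_trans ?_ hb
      have := ENNReal.toReal_mono hfin hk
      rwa [ENNReal.toReal_mul, ENNReal.toReal_ofReal hM.le] at this
    · simp [hx, (hz 0).2 rfl]
  · rw [lintegral_indicator_const hUmeas, mul_comm]
    exact hsφ
end

section
/- Let p > 1, κ > 0 and ε ∈ (0, 1/8) be real numbers, and define φ = φ_{p,κ} : ℝ → [0,∞) by φ(t) = |t|^p / (log(e + |t|⁻¹))^κ for t ≠ 0 and φ(0) = 0. Then there exists a measurable function f : ℝ → [0,∞) such that: (i) for every γ > 0, ∫_ℝ φ(f(t)/γ) dt = +∞ (so the Luxembourg norm of f with respect to Lebesgue measure on ℝ is infinite); and (ii) the function θ : ℤ → [0,∞] given by θ(n) = ‖f·𝟙_{(n−ε, n+1+ε)}‖_{L^φ(ℝ)} has finite Luxembourg norm ‖θ‖_{ℓ^φ(ℤ)} with respect to counting measure on ℤ. -/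
open MeasureTheory
open scoped ENNReal

/-- The Young function `φ_{p,κ}(t) = |t|^p / (log(e + |t|⁻¹))^κ` (with `φ_{p,κ}(0) = 0`). -/
noncomputable def phiPK (p κ t : ℝ) : ℝ :=
  if t = 0 then 0 else |t| ^ p / Real.log (Real.exp 1 + |t|⁻¹) ^ κ

namespace BourdonAux

/-- weights -/
noncomputable def w (n : ℕ) : ℝ := ((2:ℝ) ^ (Nat.log 2 n))⁻¹ * ((Nat.log 2 n : ℝ) + 1)⁻¹

/-- summable weights -/
noncomputable def g (κ : ℝ) (n : ℕ) : ℝ := w n * (((Nat.log 2 n : ℝ) + 1) ^ κ)⁻¹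

lemma w_pos (n : ℕ) : 0 < w n := by unfold w; positivity

lemma w_le (n : ℕ) : w n ≤ ((2:ℝ) ^ (Nat.log 2 n))⁻¹ := by
  unfold w
  apply mul_le_of_le_one_right (by positivity)
  apply inv_le_one_of_one_le₀
  have : (0:ℝ) ≤ (Nat.log 2 n : ℝ) := by positivity
  linarith

lemma w_le_one (n : ℕ) : w n ≤ 1 := by
  refine (w_le n).trans (inv_le_one_of_one_le₀ ?_)
  exact one_le_pow₀ (by norm_num)

lemma g_nonneg (κ : ℝ) (n : ℕ) : 0 ≤ g κ n := by
  unfold g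
  have := w_pos n
  positivity

lemma w_anti {m n : ℕ} (h : m ≤ n) : w n ≤ w m := by
  have hl : Nat.log 2 m ≤ Nat.log 2 n := Nat.log_mono_right h
  unfold w
  gcongr
  norm_num

lemma g_anti {κ : ℝ} (hκ : 0 < κ) {m n : ℕ} (h : m ≤ n) : g κ n ≤ g κ m := by
  have hl : Nat.log 2 m ≤ Nat.log 2 n := Nat.log_mono_right h
  have := w_anti h
  have := w_pos m
  unfold g
  gcongr

lemma not_summable_w : ¬ Summable w := by
  rw [← summable_condensed_iff_of_nonneg (fun n => (w_pos n).le) (fun m n _ h => w_anti h)]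
  have : (fun k : ℕ => (2:ℝ) ^ k * w (2 ^ k)) = fun k : ℕ => 1 / (((k + 1 : ℕ)) : ℝ) := by
    ext k
    unfold w
    rw [Nat.log_pow (by norm_num)]
    push_cast
    field_simp
  rw [this]
  rw [summable_nat_add_iff (f := fun k : ℕ => 1 / (k : ℝ)) 1]
  exact Real.not_summable_one_div_natCast

lemma summable_g {κ : ℝ} (hκ : 0 < κ) : Summable (g κ) := by
  rw [← summable_condensed_iff_of_nonneg (g_nonneg κ) (fun m n _ h => g_anti hκ h)]
  have : (fun k : ℕ => (2:ℝ) ^ k * g κ (2 ^ k)) =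
      fun k : ℕ => 1 / (((k + 1 : ℕ)) : ℝ) ^ (1 + κ) := by
    ext k
    unfold g w
    rw [Nat.log_pow (by norm_num)]
    push_cast
    rw [Real.rpow_add (by positivity), Real.rpow_one]
    field_simp
  rw [this]
  rw [summable_nat_add_iff (f := fun k : ℕ => 1 / (k : ℝ) ^ (1 + κ)) 1]
  exact Real.summable_one_div_nat_rpow.2 (by linarith)

lemma one_le_log {x : ℝ} (hx : 0 ≤ x) : 1 ≤ Real.log (Real.exp 1 + x) := by
  rw [Real.le_log_iff_exp_le (by positivity)]
  linarith

lemma phi_pos (p κ : ℝ) {t : ℝ} (ht : 0 < t) : 0 < phiPK p κ t := by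
  unfold phiPK
  rw [if_neg ht.ne']
  have := one_le_log (x := |t|⁻¹) (by positivity)
  have : 0 < |t| := by positivity
  positivity

lemma phi_eq (p κ : ℝ) {t : ℝ} (ht : 0 < t) :
    phiPK p κ t = t ^ p / Real.log (Real.exp 1 + t⁻¹) ^ κ := by
  unfold phiPK
  rw [if_neg ht.ne', abs_of_pos ht]

lemma phi_le_rpow (p : ℝ) {κ : ℝ} (hκ : 0 < κ) {t : ℝ} (ht : 0 < t) :
    phiPK p κ t ≤ t ^ p := by
  rw [phi_eq p κ ht]
  apply div_le_self (by positivity)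
  exact Real.one_le_rpow (one_le_log (by positivity)) hκ.le

lemma phi_zero (p κ : ℝ) : phiPK p κ 0 = 0 := by simp [phiPK]

lemma phi_mono {p κ : ℝ} (hp : 1 < p) (hκ : 0 < κ) {s t : ℝ} (hs : 0 ≤ s) (h : s ≤ t) :
    phiPK p κ s ≤ phiPK p κ t := by
  rcases hs.eq_or_lt with rfl | hs
  · rcases h.eq_or_lt with rfl | h
    · rfl
    · rw [phi_zero]; exact (phi_pos p κ h).le
  have ht := hs.trans_le h
  rw [phi_eq p κ hs, phi_eq p κ ht]
  have := one_le_log (x := t⁻¹) (by positivity)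
  gcongr

lemma phi_div {p κ : ℝ} (hκ : 0 < κ) {t γ : ℝ} (ht : 0 < t) (hγ : 1 ≤ γ) :
    phiPK p κ (t / γ) ≤ (γ ^ p)⁻¹ * phiPK p κ t := by
  have hγ0 : 0 < γ := by linarith
  rw [phi_eq p κ ht, phi_eq p κ (by positivity), Real.div_rpow ht.le hγ0.le]
  have h1 := one_le_log (x := t⁻¹) (by positivity)
  have h2 : t⁻¹ ≤ (t / γ)⁻¹ := by
    apply inv_anti₀ (by positivity)
    exact div_le_self ht.le hγ
  calc t ^ p / γ ^ p / Real.log (Real.exp 1 + (t / γ)⁻¹) ^ κ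
      ≤ t ^ p / γ ^ p / Real.log (Real.exp 1 + t⁻¹) ^ κ := by gcongr
    _ = _ := by ring

/-- constant -/
noncomputable def c (p : ℝ) : ℝ := Real.log 2 / (2 * p)

lemma c_pos {p : ℝ} (hp : 1 < p) : 0 < c p := by
  have := Real.log_pos (x := 2) (by norm_num)
  unfold c; positivity

lemma phi_a {p κ : ℝ} (hp : 1 < p) (hκ : 0 < κ) (n : ℕ) :
    phiPK p κ (w n ^ (1 / p)) ≤ (c p ^ κ)⁻¹ * g κ n := by
  have hw := w_pos n
  have hp0 : 0 < p := by linarith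
  have hc := c_pos hp
  rw [phi_eq p κ (by positivity), ← Real.rpow_mul hw.le, one_div_mul_cancel hp0.ne',
    Real.rpow_one]
  set k := Nat.log 2 n with hk
  have hl : c p * ((k:ℝ) + 1) ≤ Real.log (Real.exp 1 + (w n ^ (1 / p))⁻¹) := by
    have h1 := one_le_log (x := (w n ^ (1 / p))⁻¹) (by positivity)
    have h2 : k * Real.log 2 / p ≤ Real.log (Real.exp 1 + (w n ^ (1 / p))⁻¹) := by
      have h3 : Real.log ((w n ^ (1 / p))⁻¹) ≤ Real.log (Real.exp 1 + (w n ^ (1 / p))⁻¹) := by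
        apply Real.log_le_log (by positivity)
        have := Real.exp_pos 1
        linarith
      refine le_trans ?_ h3
      rw [Real.log_inv, Real.log_rpow hw]
      have h4 : Real.log (w n) ≤ - (k * Real.log 2) := by
        rw [← Real.log_pow, ← Real.log_inv]
        exact Real.log_le_log hw (w_le n)
      have : 1 / p * Real.log (w n) ≤ 1 / p * (- (k * Real.log 2)) := by gcongr
      calc k * Real.log 2 / p = - (1 / p * (- (k * Real.log 2))) := by ring
        _ ≤ _ := by linarith
    have h5 : Real.log 2 / p ≤ 1 := by
      rw [div_le_one hp0]
      have := Real.log_two_lt_d9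
      linarith
    have : c p * ((k:ℝ) + 1) = (k * Real.log 2 / p + Real.log 2 / p) / 2 := by
      unfold c; field_simp
    rw [this]
    linarith
  calc w n / Real.log (Real.exp 1 + (w n ^ (1 / p))⁻¹) ^ κ
      ≤ w n / (c p * ((k:ℝ) + 1)) ^ κ := by gcongr
    _ = _ := by
      rw [Real.mul_rpow hc.le (by positivity)]
      unfold g
      rw [← hk, div_eq_mul_inv, mul_inv]; ring

/-- pieces -/
def An (n : ℕ) : Set ℝ := Set.Ioo ((n:ℝ) + 1 / 4) ((n:ℝ) + 1 / 4 + w n / 2)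

/-- union -/
def A : Set ℝ := ⋃ n, An n

lemma An_sub (n : ℕ) : An n ⊆ Set.Ioo ((n:ℝ) + 1 / 4) ((n:ℝ) + 3 / 4) := by
  intro x hx
  have := w_le_one n
  exact ⟨hx.1, by have := hx.2; linarith⟩

lemma measA : MeasurableSet A := MeasurableSet.iUnion fun _ => measurableSet_Ioo

lemma vol_An (n : ℕ) : volume (An n) = ENNReal.ofReal (w n / 2) := by
  unfold An
  rw [Real.volume_Ioo]
  congr 1; ring

lemma vol_A : volume A = ⊤ := by
  unfold A
  rw [measure_iUnion (f := An) _ (fun _ => measurableSet_Ioo)]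
  · by_contra h
    simp_rw [vol_An] at h
    have := ENNReal.summable_toReal h
    apply not_summable_w
    have h2 := this.mul_left 2
    refine h2.congr fun n => ?_
    rw [ENNReal.toReal_ofReal (by have := w_pos n; positivity)]
    ring
  · intro m n hmn
    rw [Function.onFun, Set.disjoint_left]
    intro x hx hy
    have hx := An_sub m hx
    have hy := An_sub n hy
    apply hmn
    have h1 : (m:ℝ) < n + 1 := by linarith [hx.1, hy.2]
    have h2 : (n:ℝ) < m + 1 := by linarith [hx.2, hy.1]
    norm_cast at h1 h2
    omega

lemma A_inter {ε : ℝ} (hε' : ε < 1 / 8) {n : ℤ} {x : ℝ}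
    (hx : x ∈ Set.Ioo ((n : ℝ) - ε) ((n : ℝ) + 1 + ε)) (hA : x ∈ A) :
    ∃ m : ℕ, (m : ℤ) = n ∧ x ∈ An m := by
  obtain ⟨m, hm⟩ := Set.mem_iUnion.1 hA
  refine ⟨m, ?_, hm⟩
  have h := An_sub m hm
  have h1 : (n:ℝ) < (m:ℤ) + 1 := by push_cast; linarith [hx.1, h.2]
  have h2 : ((m:ℤ):ℝ) < n + 1 := by push_cast; linarith [hx.2, h.1]
  norm_cast at h1 h2
  omega

/-- the function -/
noncomputable def f : ℝ → ℝ := A.indicator fun _ => 1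

lemma theta_nat {p κ ε : ℝ} (hp : 1 < p) (hκ : 0 < κ) (hε' : ε < 1 / 8) (n : ℕ) :
    luxNorm (volume : Measure ℝ) (phiPK p κ)
      ((Set.Ioo (((n:ℤ) : ℝ) - ε) (((n:ℤ) : ℝ) + 1 + ε)).indicator f) ≤
      ENNReal.ofReal (w n ^ (1 / p)) := by
  have hw := w_pos n
  have hp0 : 0 < p := by linarith
  apply sInf_le
  refine ⟨_, ⟨by positivity, ?_⟩, rfl⟩
  calc _ ≤ ∫⁻ z, (An n).indicator (fun _ => ENNReal.ofReal ((w n)⁻¹)) z := by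
        apply lintegral_mono
        intro z
        by_cases hz : z ∈ Set.Ioo (((n:ℤ) : ℝ) - ε) (((n:ℤ) : ℝ) + 1 + ε) ∧ z ∈ A
        · obtain ⟨m, hm, hzm⟩ := A_inter hε' hz.1 hz.2
          have : m = n := by exact_mod_cast hm
          subst this
          simp only [f, Set.indicator_of_mem hz.1, Set.indicator_of_mem hz.2,
            Set.indicator_of_mem hzm]
          apply ENNReal.ofReal_le_ofReal
          refine (phi_le_rpow p hκ (by positivity)).trans_eq ?_
          rw [one_div, Real.inv_rpow (by positivity), ← Real.rpow_mul hw.le,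
            one_div_mul_cancel hp0.ne', Real.rpow_one]
        · have : (Set.Ioo (((n:ℤ) : ℝ) - ε) (((n:ℤ) : ℝ) + 1 + ε)).indicator f z = 0 := by
            unfold f
            rw [Set.indicator_indicator]; exact Set.indicator_of_notMem (s := _ ∩ A) hz (fun _ => (1:ℝ))
          beta_reduce
          rw [this, zero_div, phi_zero, ENNReal.ofReal_zero]
          exact bot_le
    _ = ENNReal.ofReal ((w n)⁻¹) * ENNReal.ofReal (w n / 2) := by
        rw [lintegral_indicator_const (s := An n) measurableSet_Ioo, vol_An]
    _ ≤ 1 := by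
        rw [← ENNReal.ofReal_mul (by positivity)]
        apply ENNReal.ofReal_le_one.2
        field_simp
        norm_num

lemma theta_neg {p κ ε : ℝ} (hε' : ε < 1 / 8) (n : ℤ) (hn : n < 0) :
    luxNorm (volume : Measure ℝ) (phiPK p κ)
      ((Set.Ioo ((n : ℝ) - ε) ((n : ℝ) + 1 + ε)).indicator f) = 0 := by
  have h0 : (Set.Ioo ((n : ℝ) - ε) ((n : ℝ) + 1 + ε)).indicator f = fun _ => 0 := by
    ext z
    by_cases hz : z ∈ Set.Ioo ((n : ℝ) - ε) ((n : ℝ) + 1 + ε)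
    · rw [Set.indicator_of_mem hz]
      apply Set.indicator_of_notMem
      intro hA
      obtain ⟨m, hm, -⟩ := A_inter hε' hz hA
      omega
    · exact Set.indicator_of_notMem hz _
  rw [h0]
  apply le_antisymm _ zero_le
  apply ENNReal.le_of_forall_pos_le_add
  intro δ hδ _
  rw [zero_add]
  apply sInf_le
  refine ⟨δ, ⟨by exact_mod_cast hδ, ?_⟩, by simp⟩
  simp [phi_zero]

end BourdonAux

open BourdonAux

/-- Bourdon's example: for `φ = φ_{p,κ}` there is a nonnegative measurable
function `f` on `ℝ` whose global Luxembourg norm is infinite (`∫ φ(f/γ) = ∞` for every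
`γ > 0`), while the sequence `θ(n) = ‖f·𝟙_{(n−ε,n+1+ε)}‖_{L^φ(ℝ)}` has finite
`ℓ^φ(ℤ)`-norm. -/
theorem bourdon_example (p κ ε : ℝ) (hp : 1 < p) (hκ : 0 < κ)
    (hε : 0 < ε) (hε' : ε < 1 / 8) :
    ∃ f : ℝ → ℝ, Measurable f ∧ (∀ t, 0 ≤ f t) ∧
      (∀ γ : ℝ, 0 < γ →
        ∫⁻ t, ENNReal.ofReal (phiPK p κ (f t / γ)) = ⊤) ∧
      luxNormENN (Measure.count : Measure ℤ) (phiPK p κ)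
          (fun n : ℤ => luxNorm (volume : Measure ℝ) (phiPK p κ)
            ((Set.Ioo ((n : ℝ) - ε) ((n : ℝ) + 1 + ε)).indicator f)) < ⊤ := by
  classical

  refine ⟨f, measurable_const.indicator measA, ?_, ?_, ?_⟩
  · intro t
    exact Set.indicator_nonneg (fun _ _ => zero_le_one) t
  · intro γ hγ
    have : ∀ t, ENNReal.ofReal (phiPK p κ (f t / γ)) =
        A.indicator (fun _ => ENNReal.ofReal (phiPK p κ (1 / γ))) t := by
      intro t
      by_cases ht : t ∈ A
      · simp [f, ht]
      · simp [f, ht, phi_zero]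
    simp_rw [this]
    rw [lintegral_indicator_const measA, vol_A, ENNReal.mul_top]
    exact (ENNReal.ofReal_pos.2 (phi_pos p κ (by positivity))).ne'
  · have hc := c_pos hp
    have hsum : Summable (fun n => (c p ^ κ)⁻¹ * g κ n) := (summable_g hκ).mul_left _
    set S := ∑' n, (c p ^ κ)⁻¹ * g κ n with hS
    set γ := max 1 S with hγ
    have hγ1 : 1 ≤ γ := le_max_left _ _
    have hγS : S ≤ γ := le_max_right _ _
    have hγ0 : 0 < γ := by linarith
    refine lt_of_le_of_lt (sInf_le ⟨γ, ⟨hγ0, ?_⟩, rfl⟩) ENNReal.ofReal_lt_top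
    rw [lintegral_count]
    rw [← Function.Injective.tsum_eq (g := ((↑) : ℕ → ℤ)) Nat.cast_injective]
    · calc _ ≤ ∑' n : ℕ, ENNReal.ofReal ((γ ^ p)⁻¹ * ((c p ^ κ)⁻¹ * g κ n)) := by
            apply ENNReal.tsum_le_tsum
            intro n
            have h := theta_nat hp hκ hε' n
            have hw := w_pos n
            rw [if_neg (ne_top_of_le_ne_top ENNReal.ofReal_ne_top h)]
            apply ENNReal.ofReal_le_ofReal
            have h' := ENNReal.toReal_le_of_le_ofReal (by positivity) h
            refine (phi_mono hp hκ (by positivity)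
              (div_le_div_of_nonneg_right h' hγ0.le)).trans ?_
            refine (phi_div hκ (by positivity) hγ1).trans ?_
            have := phi_a hp hκ n
            gcongr
        _ = ENNReal.ofReal ((γ ^ p)⁻¹ * S) := by
            rw [hS, ← tsum_mul_left, ENNReal.ofReal_tsum_of_nonneg _ (hsum.mul_left _)]
            intro n
            have := g_nonneg κ n
            positivity
        _ ≤ 1 := by
            apply ENNReal.ofReal_le_one.2
            rw [inv_mul_le_one₀ (by positivity)]
            refine hγS.trans ?_
            exact Real.self_le_rpow_of_one_le hγ1 hp.le
    · intro n hn
      by_contra hr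
      apply hn
      have : n < 0 := by
        by_contra h
        exact hr ⟨n.toNat, by simp; omega⟩
      simp [theta_neg hε' n this, phi_zero]
end

section
/- Let (C^{k,ℓ})_{k,ℓ∈ℕ} be a doubly-indexed family of topological real vector spaces (topological additive groups with continuous ℝ-module structure), equipped with continuous linear maps d' : C^{k,ℓ} → C^{k+1,ℓ} and d'' : C^{k,ℓ} → C^{k,ℓ+1} satisfying d'∘d' = 0, d''∘d'' = 0, and d'∘d'' + d''∘d' = 0. For each ℓ let E^ℓ = ker(d' : C^{0,ℓ} → C^{1,ℓ}) with the subspace topology, with inclusion ι : E^ℓ → C^{0,ℓ}; note that d'' maps E^ℓ into E^{ℓ+1}. Assume that for every ℓ the complex (C^{•,ℓ}, d') retracts to (E^ℓ → 0 → 0 → ⋯), i.e. there exist continuous linear maps h₀ : C^{0,ℓ} → E^ℓ with h₀∘ι = id_{E^ℓ}, and h_k : C^{k,ℓ} → C^{k−1,ℓ} for k ≥ 1, such that ι∘h₀ + h₁∘d' = id on C^{0,ℓ} and d'∘h_k + h_{k+1}∘d' = id on C^{k,ℓ} for all k ≥ 1. Define the total complex D^m = ∏_{k+ℓ=m} C^{k,ℓ}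 (a finite product, with the product topology) with differential δ = d' + d''. Then (D^•, δ) and (E^•, d''|_{E}) are chain homotopy equivalent through continuous linear maps: there exist continuous linear maps F^m : D^m → E^m and G^m : E^m → D^m commuting with the differentials (F^{m+1}∘δ = d''∘F^m and δ∘G^m = G^{m+1}∘d''), and continuous linear maps s^m : D^m → D^{m−1} and t^m : E^m → E^{m−1}, such that id_{D^m} − G^m∘F^m = δ∘s^m + s^{m+1}∘δ and id_{E^m} − F^m∘G^m = d''∘t^m + t^{m+1}∘d'' for all m. -/
/-- The degree-`m` part of the total complex of a first-quadrant bicomplex: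
`D^m = ∏_{k+ℓ=m} C^{k,ℓ}` (a finite product, with the product topology). -/
abbrev TotalCx (C : ℕ → ℕ → Type*) (m : ℕ) : Type _ :=
  ∀ p : {p : ℕ × ℕ // p.1 + p.2 = m}, C p.1.1 p.1.2

section TotalDiff

variable {C : ℕ → ℕ → Type*} [∀ k ℓ, AddCommGroup (C k ℓ)] [∀ k ℓ, Module ℝ (C k ℓ)]
  [∀ k ℓ, TopologicalSpace (C k ℓ)]

/-- The `d'`-part of the total differential. -/
def totalDPart (d₁ : ∀ k ℓ, C k ℓ →L[ℝ] C (k + 1) ℓ) (m : ℕ) (x : TotalCx C m) :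
    ∀ k ℓ, k + ℓ = m + 1 → C k ℓ
  | 0, _, _ => 0
  | (k + 1), ℓ, h => d₁ k ℓ (x ⟨(k, ℓ), by omega⟩)

/-- The `d''`-part of the total differential. -/
def totalDPart' (d₂ : ∀ k ℓ, C k ℓ →L[ℝ] C k (ℓ + 1)) (m : ℕ) (x : TotalCx C m) :
    ∀ k ℓ, k + ℓ = m + 1 → C k ℓ
  | _, 0, _ => 0
  | k, (ℓ + 1), h => d₂ k ℓ (x ⟨(k, ℓ), by omega⟩)

/-- The total differential `δ = d' + d''` of the bicomplex. -/
def totalδ (d₁ : ∀ k ℓ, C k ℓ →L[ℝ] C (k + 1) ℓ) (d₂ : ∀ k ℓ, C k ℓ →L[ℝ] C k (ℓ + 1))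
    (m : ℕ) (x : TotalCx C m) : TotalCx C (m + 1) :=
  fun p => totalDPart d₁ m x p.1.1 p.1.2 p.2 + totalDPart' d₂ m x p.1.1 p.1.2 p.2

end TotalDiff

section Aux

variable {C : ℕ → ℕ → Type*} [∀ k ℓ, AddCommGroup (C k ℓ)] [∀ k ℓ, Module ℝ (C k ℓ)]
  [∀ k ℓ, TopologicalSpace (C k ℓ)]

def bD1 (d₁ : ∀ k ℓ, C k ℓ →L[ℝ] C (k + 1) ℓ) (z : ∀ k ℓ, C k ℓ) : ∀ k ℓ, C k ℓ
  | 0, _ => 0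
  | (k + 1), ℓ => d₁ k ℓ (z k ℓ)

def bD2 (d₂ : ∀ k ℓ, C k ℓ →L[ℝ] C k (ℓ + 1)) (z : ∀ k ℓ, C k ℓ) : ∀ k ℓ, C k ℓ
  | _, 0 => 0
  | k, (ℓ + 1) => d₂ k ℓ (z k ℓ)

def bD (d₁ : ∀ k ℓ, C k ℓ →L[ℝ] C (k + 1) ℓ) (d₂ : ∀ k ℓ, C k ℓ →L[ℝ] C k (ℓ + 1))
    (z : ∀ k ℓ, C k ℓ) : ∀ k ℓ, C k ℓ :=
  fun k ℓ => bD1 d₁ z k ℓ + bD2 d₂ z k ℓ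

/-- extension by zero -/
def bE (m : ℕ) : TotalCx C m →L[ℝ] (∀ k ℓ, C k ℓ) :=
  ContinuousLinearMap.pi fun k => ContinuousLinearMap.pi fun ℓ =>
    if hm : k + ℓ = m then ContinuousLinearMap.proj (⟨(k, ℓ), hm⟩ : {p : ℕ × ℕ // p.1 + p.2 = m})
    else 0

/-- restriction -/
def bR (m : ℕ) : (∀ k ℓ, C k ℓ) →L[ℝ] TotalCx C m :=
  ContinuousLinearMap.pi fun p =>
    (ContinuousLinearMap.proj p.1.2).comp (ContinuousLinearMap.proj (φ := fun k => ∀ ℓ, C k ℓ) p.1.1)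

lemma bE_pos {m : ℕ} (x : TotalCx C m) {k ℓ : ℕ} (hm : k + ℓ = m) :
    bE m x k ℓ = x ⟨(k, ℓ), hm⟩ := by
  simp [bE, hm]

lemma bE_neg {m : ℕ} (x : TotalCx C m) {k ℓ : ℕ} (hm : k + ℓ ≠ m) :
    bE m x k ℓ = 0 := by
  simp [bE, hm]

lemma bR_apply {m : ℕ} (z : ∀ k ℓ, C k ℓ) (p) : bR m z p = z p.1.1 p.1.2 := rfl

lemma bR_bE {m : ℕ} (x : TotalCx C m) : bR m (bE m x) = x := by
  funext p
  rw [bR_apply, bE_pos x p.2]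

lemma bR_bD (d₁ : ∀ k ℓ, C k ℓ →L[ℝ] C (k + 1) ℓ) (d₂ : ∀ k ℓ, C k ℓ →L[ℝ] C k (ℓ + 1))
    (m : ℕ) (z : ∀ k ℓ, C k ℓ) : bR (m + 1) (bD d₁ d₂ z) = totalδ d₁ d₂ m (bR m z) := by
  funext p
  obtain ⟨⟨k, ℓ⟩, hp⟩ := p
  rw [bR_apply]
  rcases k with _ | k <;> rcases ℓ with _ | ℓ <;> rfl

lemma bE_bD (d₁ : ∀ k ℓ, C k ℓ →L[ℝ] C (k + 1) ℓ) (d₂ : ∀ k ℓ, C k ℓ →L[ℝ] C k (ℓ + 1))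
    (m : ℕ) (x : TotalCx C m) : bE (m + 1) (totalδ d₁ d₂ m x) = bD d₁ d₂ (bE m x) := by
  funext k ℓ
  by_cases hm : k + ℓ = m + 1
  · have := congrFun (bR_bD d₁ d₂ m (bE m x)) ⟨(k, ℓ), hm⟩
    rw [bR_bE] at this
    rw [bE_pos _ hm, ← this, bR_apply]
  · rw [bE_neg _ hm]
    rcases k with _ | k <;> rcases ℓ with _ | ℓ <;> simp only [bD, bD1, bD2]
    · simp
    · rw [bE_neg x (by omega)]; simp
    · rw [bE_neg x (by omega)]; simp
    · rw [bE_neg x (by omega), bE_neg x (by omega)]; simp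

abbrev bK (d₁ : ∀ k ℓ, C k ℓ →L[ℝ] C (k + 1) ℓ) (ℓ : ℕ) : Type _ :=
  ↥(LinearMap.ker (d₁ 0 ℓ).toLinearMap)

/-- inclusion of the kernels as column zero -/
def bG (d₁ : ∀ k ℓ, C k ℓ →L[ℝ] C (k + 1) ℓ) : (∀ ℓ, bK d₁ ℓ) →L[ℝ] (∀ k ℓ, C k ℓ) :=
  ContinuousLinearMap.pi fun k => ContinuousLinearMap.pi fun ℓ =>
    match k with
    | 0 => (Submodule.subtypeL (LinearMap.ker (d₁ 0 ℓ).toLinearMap)).comp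
        (ContinuousLinearMap.proj (φ := fun ℓ => bK d₁ ℓ) ℓ)
    | _ + 1 => 0

lemma bG_zero (d₁ : ∀ k ℓ, C k ℓ →L[ℝ] C (k + 1) ℓ) (f : ∀ ℓ, bK d₁ ℓ) (ℓ : ℕ) :
    bG d₁ f 0 ℓ = (f ℓ : C 0 ℓ) := rfl

lemma bG_succ (d₁ : ∀ k ℓ, C k ℓ →L[ℝ] C (k + 1) ℓ) (f : ∀ ℓ, bK d₁ ℓ) (k ℓ : ℕ) :
    bG d₁ f (k + 1) ℓ = 0 := rfl

def bpr (k ℓ : ℕ) : (∀ k ℓ, C k ℓ) →L[ℝ] C k ℓ :=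
  (ContinuousLinearMap.proj ℓ).comp (ContinuousLinearMap.proj (φ := fun k => ∀ ℓ, C k ℓ) k)

variable [∀ k ℓ, IsTopologicalAddGroup (C k ℓ)]

def bS (d₂ : ∀ k ℓ, C k ℓ →L[ℝ] C k (ℓ + 1)) (h : ∀ k ℓ, C (k + 1) ℓ →L[ℝ] C k ℓ) :
    ∀ ℓ k, (∀ k ℓ, C k ℓ) →L[ℝ] C k ℓ
  | 0, k => (h k 0).comp (bpr (k + 1) 0)
  | ℓ + 1, k => (h k (ℓ + 1)).comp
      (bpr (k + 1) (ℓ + 1) - (d₂ (k + 1) ℓ).comp (bS d₂ h ℓ (k + 1)))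

def bF (d₁ : ∀ k ℓ, C k ℓ →L[ℝ] C (k + 1) ℓ) (d₂ : ∀ k ℓ, C k ℓ →L[ℝ] C k (ℓ + 1))
    (h : ∀ k ℓ, C (k + 1) ℓ →L[ℝ] C k ℓ) (h₀ : ∀ ℓ, C 0 ℓ →L[ℝ] bK d₁ ℓ) :
    ∀ ℓ, (∀ k ℓ, C k ℓ) →L[ℝ] bK d₁ ℓ
  | 0 => (h₀ 0).comp (bpr 0 0)
  | ℓ + 1 => (h₀ (ℓ + 1)).comp (bpr 0 (ℓ + 1) - (d₂ 0 ℓ).comp (bS d₂ h ℓ 0))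

def bSt (d₂ : ∀ k ℓ, C k ℓ →L[ℝ] C k (ℓ + 1)) (h : ∀ k ℓ, C (k + 1) ℓ →L[ℝ] C k ℓ) :
    (∀ k ℓ, C k ℓ) →L[ℝ] (∀ k ℓ, C k ℓ) :=
  ContinuousLinearMap.pi fun k => ContinuousLinearMap.pi fun ℓ => bS d₂ h ℓ k

lemma bSt_zero (d₂ : ∀ k ℓ, C k ℓ →L[ℝ] C k (ℓ + 1)) (h : ∀ k ℓ, C (k + 1) ℓ →L[ℝ] C k ℓ)
    (z : ∀ k ℓ, C k ℓ) (k : ℕ) : bSt d₂ h z k 0 = h k 0 (z (k + 1) 0) := rfl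

lemma bSt_succ (d₂ : ∀ k ℓ, C k ℓ →L[ℝ] C k (ℓ + 1)) (h : ∀ k ℓ, C (k + 1) ℓ →L[ℝ] C k ℓ)
    (z : ∀ k ℓ, C k ℓ) (k ℓ : ℕ) : bSt d₂ h z k (ℓ + 1) =
      h k (ℓ + 1) (z (k + 1) (ℓ + 1) - d₂ (k + 1) ℓ (bSt d₂ h z (k + 1) ℓ)) := rfl

lemma bF_zero (d₁ : ∀ k ℓ, C k ℓ →L[ℝ] C (k + 1) ℓ) (d₂ : ∀ k ℓ, C k ℓ →L[ℝ] C k (ℓ + 1))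
    (h : ∀ k ℓ, C (k + 1) ℓ →L[ℝ] C k ℓ) (h₀ : ∀ ℓ, C 0 ℓ →L[ℝ] bK d₁ ℓ)
    (z : ∀ k ℓ, C k ℓ) : bF d₁ d₂ h h₀ 0 z = h₀ 0 (z 0 0) := rfl

lemma bF_succ (d₁ : ∀ k ℓ, C k ℓ →L[ℝ] C (k + 1) ℓ) (d₂ : ∀ k ℓ, C k ℓ →L[ℝ] C k (ℓ + 1))
    (h : ∀ k ℓ, C (k + 1) ℓ →L[ℝ] C k ℓ) (h₀ : ∀ ℓ, C 0 ℓ →L[ℝ] bK d₁ ℓ)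
    (z : ∀ k ℓ, C k ℓ) (ℓ : ℕ) : bF d₁ d₂ h h₀ (ℓ + 1) z =
      h₀ (ℓ + 1) (z 0 (ℓ + 1) - d₂ 0 ℓ (bSt d₂ h z 0 ℓ)) := rfl

lemma bSt_bG (d₁ : ∀ k ℓ, C k ℓ →L[ℝ] C (k + 1) ℓ) (d₂ : ∀ k ℓ, C k ℓ →L[ℝ] C k (ℓ + 1))
    (h : ∀ k ℓ, C (k + 1) ℓ →L[ℝ] C k ℓ) (f : ∀ ℓ, bK d₁ ℓ) (ℓ : ℕ) :
    ∀ k, bSt d₂ h (bG d₁ f) k ℓ = 0 := by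
  induction ℓ with
  | zero => intro k; rw [bSt_zero, bG_succ, map_zero]
  | succ ℓ ih => intro k; rw [bSt_succ, bG_succ, ih, map_zero, sub_zero, map_zero]

lemma bF_bG (d₁ : ∀ k ℓ, C k ℓ →L[ℝ] C (k + 1) ℓ) (d₂ : ∀ k ℓ, C k ℓ →L[ℝ] C k (ℓ + 1))
    (h : ∀ k ℓ, C (k + 1) ℓ →L[ℝ] C k ℓ) (h₀ : ∀ ℓ, C 0 ℓ →L[ℝ] bK d₁ ℓ)
    (hsec : ∀ ℓ (y : bK d₁ ℓ), h₀ ℓ (y : C 0 ℓ) = y)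
    (f : ∀ ℓ, bK d₁ ℓ) (ℓ : ℕ) : bF d₁ d₂ h h₀ ℓ (bG d₁ f) = f ℓ := by
  rcases ℓ with _ | ℓ
  · rw [bF_zero, bG_zero, hsec]
  · rw [bF_succ, bSt_bG, bG_zero, map_zero, sub_zero, hsec]

lemma b_main (d₁ : ∀ k ℓ, C k ℓ →L[ℝ] C (k + 1) ℓ) (d₂ : ∀ k ℓ, C k ℓ →L[ℝ] C k (ℓ + 1))
    (h : ∀ k ℓ, C (k + 1) ℓ →L[ℝ] C k ℓ) (h₀ : ∀ ℓ, C 0 ℓ →L[ℝ] bK d₁ ℓ)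
    (hd₂ : ∀ k ℓ (x : C k ℓ), d₂ k (ℓ + 1) (d₂ k ℓ x) = 0)
    (hanti : ∀ k ℓ (x : C k ℓ), d₂ (k + 1) ℓ (d₁ k ℓ x) + d₁ k (ℓ + 1) (d₂ k ℓ x) = 0)
    (hret0 : ∀ ℓ (x : C 0 ℓ), ((h₀ ℓ x : C 0 ℓ)) + h 0 ℓ (d₁ 0 ℓ x) = x)
    (hret : ∀ k ℓ (x : C (k + 1) ℓ),
      d₁ k ℓ (h k ℓ x) + h (k + 1) ℓ (d₁ (k + 1) ℓ x) = x)
    (z : ∀ k ℓ, C k ℓ) (ℓ : ℕ) : ∀ k,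
    bSt d₂ h (bD d₁ d₂ z) k ℓ =
      z k ℓ - bG d₁ (fun ℓ => bF d₁ d₂ h h₀ ℓ z) k ℓ - bD d₁ d₂ (bSt d₂ h z) k ℓ := by
  induction ℓ with
  | zero =>
    intro k
    rw [bSt_zero]
    rcases k with _ | k
    · rw [bG_zero, bF_zero]
      simp only [bD, bD1, bD2, add_zero, sub_zero]
      exact eq_sub_of_add_eq' (hret0 0 _)
    · rw [bG_succ]
      simp only [bD, bD1, bD2, add_zero, sub_zero, bSt_zero]
      exact eq_sub_of_add_eq' (hret k 0 _)
  | succ ℓ ih =>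
    intro k
    have hkill : d₂ (k + 1) ℓ (bD2 d₂ (bSt d₂ h z) (k + 1) ℓ) = 0 := by
      rcases ℓ with _ | ℓ
      · simp only [bD2, map_zero]
      · simp only [bD2, hd₂]
    have key : bSt d₂ h (bD d₁ d₂ z) k (ℓ + 1) =
        h k (ℓ + 1) (d₁ k (ℓ + 1) (z k (ℓ + 1) - d₂ k ℓ (bSt d₂ h z k ℓ))) := by
      rw [bSt_succ, ih, bG_succ]
      congr 1
      have e := eq_neg_of_add_eq_zero_right (hanti k ℓ (bSt d₂ h z k ℓ))
      simp only [bD, map_sub, map_add, hkill, e, bD1, sub_zero]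
      simp only [bD2]
      abel
    rw [key]
    rcases k with _ | k
    · rw [bG_zero, bF_succ]
      simp only [bD, bD1, bD2, zero_add]
      have e := hret0 (ℓ + 1) (z 0 (ℓ + 1) - d₂ 0 ℓ (bSt d₂ h z 0 ℓ))
      rw [eq_sub_of_add_eq' e]
      abel
    · rw [bG_succ]
      have e := hret k (ℓ + 1) (z (k + 1) (ℓ + 1) - d₂ (k + 1) ℓ (bSt d₂ h z (k + 1) ℓ))
      simp only [bD, bD1, bD2]
      rw [eq_sub_of_add_eq' e, bSt_succ]
      abel

lemma b_chain (d₁ : ∀ k ℓ, C k ℓ →L[ℝ] C (k + 1) ℓ) (d₂ : ∀ k ℓ, C k ℓ →L[ℝ] C k (ℓ + 1))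
    (h : ∀ k ℓ, C (k + 1) ℓ →L[ℝ] C k ℓ) (h₀ : ∀ ℓ, C 0 ℓ →L[ℝ] bK d₁ ℓ)
    (d₂E : ∀ ℓ, bK d₁ ℓ →L[ℝ] bK d₁ (ℓ + 1))
    (hd₂E : ∀ ℓ (x : bK d₁ ℓ), (d₂E ℓ x : C 0 (ℓ + 1)) = d₂ 0 ℓ (x : C 0 ℓ))
    (hsec : ∀ ℓ (y : bK d₁ ℓ), h₀ ℓ (y : C 0 ℓ) = y)
    (hd₂ : ∀ k ℓ (x : C k ℓ), d₂ k (ℓ + 1) (d₂ k ℓ x) = 0)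
    (hanti : ∀ k ℓ (x : C k ℓ), d₂ (k + 1) ℓ (d₁ k ℓ x) + d₁ k (ℓ + 1) (d₂ k ℓ x) = 0)
    (hret0 : ∀ ℓ (x : C 0 ℓ), ((h₀ ℓ x : C 0 ℓ)) + h 0 ℓ (d₁ 0 ℓ x) = x)
    (hret : ∀ k ℓ (x : C (k + 1) ℓ),
      d₁ k ℓ (h k ℓ x) + h (k + 1) ℓ (d₁ (k + 1) ℓ x) = x)
    (z : ∀ k ℓ, C k ℓ) (ℓ : ℕ) :
    bF d₁ d₂ h h₀ (ℓ + 1) (bD d₁ d₂ z) = d₂E ℓ (bF d₁ d₂ h h₀ ℓ z) := by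
  have hkill : d₂ 0 ℓ (bD2 d₂ (bSt d₂ h z) 0 ℓ) = 0 := by
    rcases ℓ with _ | ℓ
    · simp only [bD2, map_zero]
    · simp only [bD2, hd₂]
  rw [bF_succ, b_main d₁ d₂ h h₀ hd₂ hanti hret0 hret, bG_zero]
  rw [← hsec (ℓ + 1) (d₂E ℓ _), hd₂E]
  congr 1
  simp only [bD, map_sub, map_add, hkill, bD1, sub_zero, map_zero, add_zero, zero_add]
  simp only [bD2]
  abel

end Aux

/-- the bicomplex lemma: given a first-quadrant bicomplex `(C^{k,ℓ})` of
topological real vector spaces with continuous differentials `d'`, `d''` satisfying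
`d'd' = 0`, `d''d'' = 0`, `d'd'' + d''d' = 0`, whose rows retract continuously onto
`E^ℓ = ker(d' : C^{0,ℓ} → C^{1,ℓ})`, the total complex `(D^•, δ = d' + d'')` is chain
homotopy equivalent, through continuous linear maps, to `(E^•, d''|_E)`. -/
theorem bicomplex_total_homotopy_equiv
    (C : ℕ → ℕ → Type*) [∀ k ℓ, AddCommGroup (C k ℓ)] [∀ k ℓ, Module ℝ (C k ℓ)]
    [∀ k ℓ, TopologicalSpace (C k ℓ)] [∀ k ℓ, IsTopologicalAddGroup (C k ℓ)]
    [∀ k ℓ, ContinuousSMul ℝ (C k ℓ)]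
    (d₁ : ∀ k ℓ, C k ℓ →L[ℝ] C (k + 1) ℓ)
    (d₂ : ∀ k ℓ, C k ℓ →L[ℝ] C k (ℓ + 1))
    (hd₁ : ∀ k ℓ (x : C k ℓ), d₁ (k + 1) ℓ (d₁ k ℓ x) = 0)
    (hd₂ : ∀ k ℓ (x : C k ℓ), d₂ k (ℓ + 1) (d₂ k ℓ x) = 0)
    (hanti : ∀ k ℓ (x : C k ℓ), d₂ (k + 1) ℓ (d₁ k ℓ x) + d₁ k (ℓ + 1) (d₂ k ℓ x) = 0)
    -- `d''` restricts to a continuous linear map `E^ℓ → E^{ℓ+1}`: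
    (d₂E : ∀ ℓ, ↥(LinearMap.ker (d₁ 0 ℓ).toLinearMap) →L[ℝ] ↥(LinearMap.ker (d₁ 0 (ℓ + 1)).toLinearMap))
    (hd₂E : ∀ ℓ (x : ↥(LinearMap.ker (d₁ 0 ℓ).toLinearMap)),
      (d₂E ℓ x : C 0 (ℓ + 1)) = d₂ 0 ℓ (x : C 0 ℓ))
    -- every row retracts continuously onto `E^ℓ`:
    (h₀ : ∀ ℓ, C 0 ℓ →L[ℝ] ↥(LinearMap.ker (d₁ 0 ℓ).toLinearMap))
    (h : ∀ k ℓ, C (k + 1) ℓ →L[ℝ] C k ℓ)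
    (hsec : ∀ ℓ (y : ↥(LinearMap.ker (d₁ 0 ℓ).toLinearMap)), h₀ ℓ (y : C 0 ℓ) = y)
    (hret0 : ∀ ℓ (x : C 0 ℓ), ((h₀ ℓ x : C 0 ℓ)) + h 0 ℓ (d₁ 0 ℓ x) = x)
    (hret : ∀ k ℓ (x : C (k + 1) ℓ),
      d₁ k ℓ (h k ℓ x) + h (k + 1) ℓ (d₁ (k + 1) ℓ x) = x) :
    ∃ (F : ∀ m, TotalCx C m →L[ℝ] ↥(LinearMap.ker (d₁ 0 m).toLinearMap))
      (G : ∀ m, ↥(LinearMap.ker (d₁ 0 m).toLinearMap) →L[ℝ] TotalCx C m)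
      (s : ∀ m, TotalCx C (m + 1) →L[ℝ] TotalCx C m)
      (t : ∀ m, ↥(LinearMap.ker (d₁ 0 (m + 1)).toLinearMap) →L[ℝ] ↥(LinearMap.ker (d₁ 0 m).toLinearMap)),
      -- `F` and `G` are chain maps:
      (∀ m (x : TotalCx C m), F (m + 1) (totalδ d₁ d₂ m x) = d₂E m (F m x)) ∧
      (∀ m (y : ↥(LinearMap.ker (d₁ 0 m).toLinearMap)),
        totalδ d₁ d₂ m (G m y) = G (m + 1) (d₂E m y)) ∧
      -- `s` is a homotopy from `G ∘ F` to the identity of the total complex: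
      (∀ x : TotalCx C 0, x - G 0 (F 0 x) = s 0 (totalδ d₁ d₂ 0 x)) ∧
      (∀ m (x : TotalCx C (m + 1)),
        x - G (m + 1) (F (m + 1) x) =
          totalδ d₁ d₂ m (s m x) + s (m + 1) (totalδ d₁ d₂ (m + 1) x)) ∧
      -- `t` is a homotopy from `F ∘ G` to the identity of `(E^•, d''|_E)`:
      (∀ y : ↥(LinearMap.ker (d₁ 0 0).toLinearMap), y - F 0 (G 0 y) = t 0 (d₂E 0 y)) ∧
      (∀ m (y : ↥(LinearMap.ker (d₁ 0 (m + 1)).toLinearMap)),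
        y - F (m + 1) (G (m + 1) y) = d₂E m (t m y) + t (m + 1) (d₂E (m + 1) y)) := by
  classical
  let sg : ∀ m, bK d₁ m →L[ℝ] (∀ ℓ, bK d₁ ℓ) := fun m =>
    ContinuousLinearMap.single ℝ (fun ℓ => bK d₁ ℓ) m
  have sg_same : ∀ m y, sg m y m = y := fun m y => Pi.single_eq_same m y
  have sg_ne : ∀ m y ℓ, ℓ ≠ m → sg m y ℓ = 0 := fun m y ℓ hl => Pi.single_eq_of_ne hl y
  have hom := b_main d₁ d₂ h h₀ hd₂ hanti hret0 hret
  -- `bR m (bG f)` depends only on `f m`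
  have hRG : ∀ m (f g : ∀ ℓ, bK d₁ ℓ), f m = g m → bR m (bG d₁ f) = bR m (bG d₁ g) := by
    intro m f g hfg
    funext p
    obtain ⟨⟨k, ℓ⟩, hp⟩ := p
    rw [bR_apply, bR_apply]
    rcases k with _ | k
    · have hl : ℓ = m := by simpa using hp
      subst hl
      simp only [bG_zero, hfg]
    · rfl
  have hER : ∀ m y, bE m (bR m (bG d₁ (sg m y))) = bG d₁ (sg m y) := by
    intro m y
    funext k ℓ
    by_cases hm : k + ℓ = m
    · rw [bE_pos _ hm, bR_apply]
    · rw [bE_neg _ hm]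
      rcases k with _ | k
      · rw [bG_zero, sg_ne m y ℓ (by omega)]; rfl
      · rfl
  have hDG : ∀ f : ∀ ℓ, bK d₁ ℓ, ∀ m, bR (m + 1) (bD d₁ d₂ (bG d₁ f)) =
      bR (m + 1) (bG d₁ (sg (m + 1) (d₂E m (f m)))) := by
    intro f m
    funext p
    obtain ⟨⟨k, ℓ⟩, hp⟩ := p
    rw [bR_apply, bR_apply]
    have hf : ∀ ℓ, d₁ 0 ℓ (f ℓ : C 0 ℓ) = 0 := fun ℓ => (f ℓ).2
    rcases k with _ | k
    · have hl : ℓ = m + 1 := by simpa using hp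
      subst hl
      simp only [bG_zero, sg_same, hd₂E, bD, bD1, bD2, zero_add]
    · simp only [bG_succ, bD]
      rcases k with _ | k <;> rcases ℓ with _ | ℓ <;>
        simp only [bD1, bD2, bG_succ, bG_zero, hf, map_zero, add_zero]
  refine ⟨fun m => (bF d₁ d₂ h h₀ m).comp (bE m), fun m => (bR m).comp ((bG d₁).comp (sg m)),
    fun m => (bR m).comp ((bSt d₂ h).comp (bE (m + 1))), fun m => 0, ?_, ?_, ?_, ?_, ?_, ?_⟩
  · intro m x
    simp only [ContinuousLinearMap.comp_apply]
    rw [bE_bD]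
    exact b_chain d₁ d₂ h h₀ d₂E hd₂E hsec hd₂ hanti hret0 hret _ m
  · intro m y
    simp only [ContinuousLinearMap.comp_apply]
    rw [← bR_bD, hDG, sg_same]
  · intro x
    simp only [ContinuousLinearMap.comp_apply]
    rw [bE_bD, hRG 0 _ (fun ℓ => bF d₁ d₂ h h₀ ℓ (bE 0 x)) (sg_same _ _)]
    funext p
    obtain ⟨⟨k, ℓ⟩, hp⟩ := p
    have hk : k = 0 := by simp at hp; omega
    have hl : ℓ = 0 := by simp at hp; omega
    subst hk hl
    rw [Pi.sub_apply, bR_apply, bR_apply, hom, bE_pos x hp]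
    simp only [bD, bD1, bD2, add_zero, sub_zero]
  · intro m x
    simp only [ContinuousLinearMap.comp_apply]
    rw [bE_bD, hRG (m + 1) _ (fun ℓ => bF d₁ d₂ h h₀ ℓ (bE (m + 1) x)) (sg_same _ _), ← bR_bD]
    funext p
    obtain ⟨⟨k, ℓ⟩, hp⟩ := p
    rw [Pi.sub_apply, Pi.add_apply, bR_apply, bR_apply, bR_apply, hom, bE_pos x hp]
    abel
  · intro y
    simp only [ContinuousLinearMap.comp_apply]
    rw [hER, bF_bG d₁ d₂ h h₀ hsec, sg_same]
    simp
  · intro m y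
    simp only [ContinuousLinearMap.comp_apply]
    rw [hER, bF_bG d₁ d₂ h h₀ hsec, sg_same]
    simp
end
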